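/- arXiv:math/9812080 — 3 statements merged into one kernel-verified Lean document; each statement's English description precedes it below -/
import Mathlib

section
/- Let η∈ℕ^n be a composition and let E_η be the non-symmetric Macdonald polynomial. Then E_η(1,t,t^2,…,t^{n−1})·d_η(q,t) = t^{l(η)}·e_η(q,t), as an identity in ℚ(q,t), where E_η(1,t,…,t^{n−1}) denotes the evaluation of E_η at x_i = t^{i−1} for 1≤i≤n. -/
/- STATEMENT 10: E_η(1,t,t^2,…,t^{n−1})·d_η(q,t) = t^{l(η)}·e_η(q,t) in ℚ(q,t). -/

open Finset MvPolynomial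

namespace Stmt10

/-- leg colength l'_η(i) -/
def legCo (n : ℕ) (η : Fin n → ℕ) (i : Fin n) : ℕ :=
  (univ.filter fun k => k < i ∧ η i ≤ η k).card +
  (univ.filter fun k => i < k ∧ η i < η k).card

/-- leg length l(s) of the node s = (i,j) -/
def leg (n : ℕ) (η : Fin n → ℕ) (i : Fin n) (j : ℕ) : ℕ :=
  (univ.filter fun k => i < k ∧ j ≤ η k ∧ η k ≤ η i).card +
  (univ.filter fun k => k < i ∧ j ≤ η k + 1 ∧ η k + 1 ≤ η i).card

/-- The field K = ℚ(q,t). -/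
abbrev K : Type := FractionRing (MvPolynomial (Fin 2) ℚ)

noncomputable def q : K := algebraMap (MvPolynomial (Fin 2) ℚ) K (X 0)
noncomputable def t : K := algebraMap (MvPolynomial (Fin 2) ℚ) K (X 1)

/-- The polynomial ring K[x_1,…,x_n]. -/
abbrev P (n : ℕ) : Type := MvPolynomial (Fin n) K

/-- the automorphism s_k exchanging x_k and x_{k+1} (0-indexed; identity out of range) -/
noncomputable def sOp (n : ℕ) (k : ℕ) : P n →ₗ[K] P n :=
  if h : k + 1 < n then
    (rename (Equiv.swap (⟨k, Nat.lt_of_succ_lt h⟩ : Fin n) ⟨k + 1, h⟩)).toLinearMap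
  else LinearMap.id

/-- τ_1 : x_1 ↦ qv·x_1 (the first variable is 0-indexed) -/
noncomputable def tauOp (n : ℕ) (qv : K) : P n →ₗ[K] P n :=
  (aeval (fun j : Fin n => if (j : ℕ) = 0 then C qv * X j else X j)).toLinearMap

/-- ω := s_{n−1}⋯s_2 s_1 τ_1 -/
noncomputable def omegaOp (n : ℕ) (qv : K) : P n →ₗ[K] P n :=
  (List.range (n - 1)).foldl (fun acc k => sOp n k ∘ₗ acc) (tauOp n qv)

/-- The defining property of the Demazure–Lustig operators T_k (0-indexed), for the
parameter value tv: (x_k − x_{k+1})·(T_k f) = (x_k − x_{k+1})·tv·f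
+ (tv·x_k − x_{k+1})·(s_k f − f), i.e. T_k f is the polynomial quotient from the usual
definition. -/
def IsDL (n : ℕ) (tv : K) (T : ℕ → P n →ₗ[K] P n) : Prop :=
  ∀ k, ∀ hk : k + 1 < n, ∀ f : P n,
    (X (⟨k, Nat.lt_of_succ_lt hk⟩ : Fin n) - X ⟨k + 1, hk⟩) * T k f =
      (X (⟨k, Nat.lt_of_succ_lt hk⟩ : Fin n) - X ⟨k + 1, hk⟩) * (C tv * f) +
      (C tv * X (⟨k, Nat.lt_of_succ_lt hk⟩ : Fin n) - X ⟨k + 1, hk⟩) * (sOp n k f - f)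

/-- T_k⁻¹ = tv⁻¹ − 1 + tv⁻¹ T_k -/
noncomputable def Tinv (n : ℕ) (tv : K) (T : ℕ → P n →ₗ[K] P n) (k : ℕ) : P n →ₗ[K] P n :=
  tv⁻¹ • LinearMap.id - LinearMap.id + tv⁻¹ • T k

/-- The Cherednik operator Y_i (0-indexed i):
Y_i = tv^{i+1−n}·T_i⋯T_{n−2}·ω·T_0⁻¹⋯T_{i−1}⁻¹. -/
noncomputable def Yop (n : ℕ) (qv tv : K) (T : ℕ → P n →ₗ[K] P n) (i : Fin n) :
    P n →ₗ[K] P n :=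
  (tv ^ (n - 1 - (i : ℕ)))⁻¹ •
    (((List.range' (i : ℕ) (n - 1 - (i : ℕ))).foldr (fun k acc => T k ∘ₗ acc) LinearMap.id) ∘ₗ
      omegaOp n qv ∘ₗ
      ((List.range (i : ℕ)).foldr (fun k acc => Tinv n tv T k ∘ₗ acc) LinearMap.id))

/-- the decreasing rearrangement η⁺ of η -/
noncomputable def sortDesc (n : ℕ) (η : Fin n → ℕ) : Fin n → ℕ :=
  fun i => η (Tuple.sort η i.rev)

/-- dominance order on n-tuples (of equal sum) -/
def domLE (n : ℕ) (ν μ : Fin n → ℕ) : Prop :=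
  (∑ i, ν i = ∑ i, μ i) ∧
  ∀ p : Fin n, ∑ i ∈ univ.filter (· ≤ p), ν i ≤ ∑ i ∈ univ.filter (· ≤ p), μ i

def domLT (n : ℕ) (ν μ : Fin n → ℕ) : Prop := domLE n ν μ ∧ ν ≠ μ

/-- the order ≺ : ν ≺ η iff ν⁺ < η⁺, or ν⁺ = η⁺ and ν < η (dominance order) -/
noncomputable def prec (n : ℕ) (ν η : Fin n → ℕ) : Prop :=
  domLT n (sortDesc n ν) (sortDesc n η) ∨ (sortDesc n ν = sortDesc n η ∧ domLT n ν η)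

/-- E is the non-symmetric Macdonald polynomial for the composition η (with parameters
qv, tv and Demazure–Lustig operators T): it has the triangular form
E = x^η + Σ_{ν≺η} b_{ην} x^ν and satisfies Y_i E = qv^{η_i}·tv^{−l'_η(i)}·E for all i. -/
noncomputable def IsNSMac (n : ℕ) (qv tv : K) (T : ℕ → P n →ₗ[K] P n)
    (η : Fin n → ℕ) (E : P n) : Prop :=
  coeff (Finsupp.equivFunOnFinite.symm η) E = 1 ∧
  (∀ ν : Fin n →₀ ℕ, coeff ν E ≠ 0 → (ν : Fin n → ℕ) = η ∨ prec n (ν : Fin n → ℕ) η) ∧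
  ∀ i : Fin n, Yop n qv tv T i E = (qv ^ η i / tv ^ legCo n η i) • E

/-- d_η(q,t) = ∏_s (1 − q^{a(s)+1} t^{l(s)+1}) -/
noncomputable def dP (n : ℕ) (η : Fin n → ℕ) : K :=
  ∏ i : Fin n, ∏ j ∈ Finset.Icc 1 (η i), (1 - q ^ (η i - j + 1) * t ^ (leg n η i j + 1))

/-- e_η(q,t) = ∏_s (1 − q^{a'(s)+1} t^{n−l'(s)}) -/
noncomputable def eP (n : ℕ) (η : Fin n → ℕ) : K :=
  ∏ i : Fin n, ∏ j ∈ Finset.Icc 1 (η i), (1 - q ^ ((j - 1) + 1) * t ^ (n - legCo n η i))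

/-- l(η) = Σ_s l(s) -/
def lTot (n : ℕ) (η : Fin n → ℕ) : ℕ :=
  ∑ i : Fin n, ∑ j ∈ Finset.Icc 1 (η i), leg n η i j

end Stmt10

namespace Stmt10

instance : Infinite K :=
  Infinite.of_injective (algebraMap (MvPolynomial (Fin 2) ℚ) K) (IsFractionRing.injective _ _)

lemma qt_inj {a b c d : ℕ} (h : q ^ a * t ^ b = q ^ c * t ^ d) : a = c ∧ b = d := by
  unfold q t at h
  rw [← map_pow, ← map_pow, ← map_pow, ← map_pow, ← map_mul, ← map_mul] at h
  have h2 := IsFractionRing.injective (MvPolynomial (Fin 2) ℚ) K h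
  rw [X_pow_eq_monomial, X_pow_eq_monomial, X_pow_eq_monomial, X_pow_eq_monomial,
    monomial_mul, monomial_mul, mul_one, monomial_left_inj one_ne_zero] at h2
  have h0 := DFunLike.congr_fun h2 0
  have h1 := DFunLike.congr_fun h2 1
  simp at h0 h1
  exact ⟨h0, h1⟩

lemma q_ne : q ≠ 0 := by
  unfold q
  rw [Ne, FaithfulSMul.algebraMap_eq_zero_iff]
  exact X_ne_zero 0

lemma t_ne : t ≠ 0 := by
  unfold t
  rw [Ne, FaithfulSMul.algebraMap_eq_zero_iff]
  exact X_ne_zero 1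

lemma ext_gen {n : ℕ} {f g : P n}
    (h : ∀ v : Fin n → K, Function.Injective v → eval v f = eval v g) : f = g := by
  classical
  set D : P n := ∏ p ∈ (univ : Finset (Fin n)).offDiag, (X p.1 - X p.2) with hD
  have hD0 : D ≠ 0 := by
    rw [hD, Finset.prod_ne_zero_iff]
    intro p hp
    rw [Finset.mem_offDiag] at hp
    intro h0
    exact hp.2.2 (X_injective (sub_eq_zero.mp h0))
  apply mul_left_cancel₀ hD0
  apply MvPolynomial.funext
  intro v
  by_cases hv : Function.Injective v
  · rw [map_mul, map_mul, h v hv]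
  · have : eval v D = 0 := by
      rw [hD, map_prod]
      simp only [Function.Injective, not_forall] at hv
      obtain ⟨a, b, hab, hne⟩ := hv
      apply Finset.prod_eq_zero (i := (a, b))
      · simp [hne]
      · simp [hab]
    rw [map_mul, map_mul, this, zero_mul, zero_mul]

lemma eval_sOp {n k : ℕ} (h : k + 1 < n) (v : Fin n → K) (f : P n) :
    eval v (sOp n k f) =
      eval (v ∘ Equiv.swap (⟨k, Nat.lt_of_succ_lt h⟩ : Fin n) ⟨k + 1, h⟩) f := by
  simp [sOp, h, eval_rename]

section
variable {n : ℕ} {T : ℕ → P n →ₗ[K] P n} (hT : IsDL n t T)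

lemma eval_T (hT : IsDL n t T) {k : ℕ} (i j : Fin n) (hi : (i : ℕ) = k) (hj : (j : ℕ) = k + 1) (v : Fin n → K)
    (hv : v i ≠ v j) (f : P n) :
    eval v (T k f) = (t * v i - v j) / (v i - v j) * eval (v ∘ Equiv.swap i j) f
      + (1 - t) * v j / (v i - v j) * eval v f := by
  have hk : k + 1 < n := hj ▸ j.2
  obtain rfl : i = ⟨k, Nat.lt_of_succ_lt hk⟩ := Fin.ext hi
  obtain rfl : j = ⟨k + 1, hk⟩ := Fin.ext hj
  have h := congrArg (eval v) (hT k hk f)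
  simp only [map_mul, map_sub, map_add, eval_X, eval_C, eval_sOp hk] at h
  have h0 := sub_ne_zero.mpr hv
  field_simp
  linear_combination h

/-- T_k T_k⁻¹ = 1 and the quadratic relation -/
lemma T_quad (hT : IsDL n t T) {k : ℕ} (hk : k + 1 < n) (f : P n) :
    T k (T k f) = (t - 1) • T k f + t • f := by
  apply ext_gen
  intro v hv
  set i : Fin n := ⟨k, Nat.lt_of_succ_lt hk⟩ with hi
  set j : Fin n := ⟨k + 1, hk⟩ with hj
  have hij : i ≠ j := by simp [hi, hj]
  have h1 : v i ≠ v j := fun h => hij (hv h)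
  have h2 : (v ∘ Equiv.swap i j) i ≠ (v ∘ Equiv.swap i j) j := by simpa using h1.symm
  have e : (v ∘ Equiv.swap i j) ∘ Equiv.swap i j = v := by
    ext x; simp
  simp only [map_add, smul_eval]
  rw [eval_T hT i j rfl rfl v h1 (T k f), eval_T hT i j rfl rfl _ h2 f,
    eval_T hT i j rfl rfl v h1 f, e]
  simp only [Function.comp, Equiv.swap_apply_left, Equiv.swap_apply_right]
  have h3 := sub_ne_zero.mpr h1
  have h4 := sub_ne_zero.mpr h1.symm
  generalize eval (fun x => v ((Equiv.swap i j) x)) f = F1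
  generalize eval v f = F2
  generalize v i = a at *
  generalize v j = b at *
  have h5 : b - a = -(a - b) := by ring
  rw [h5]
  field_simp
  ring

lemma T_far (hT : IsDL n t T) {k l : ℕ} (hkl : k + 1 < l) (hl : l + 1 < n) (f : P n) :
    T k (T l f) = T l (T k f) := by
  apply ext_gen
  intro v hv
  obtain ⟨i, hi⟩ : ∃ i : Fin n, (i : ℕ) = k := ⟨⟨k, by omega⟩, rfl⟩
  obtain ⟨j, hj⟩ : ∃ i : Fin n, (i : ℕ) = k + 1 := ⟨⟨k + 1, by omega⟩, rfl⟩
  obtain ⟨i', hi'⟩ : ∃ i : Fin n, (i : ℕ) = l := ⟨⟨l, by omega⟩, rfl⟩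
  obtain ⟨j', hj'⟩ : ∃ i : Fin n, (i : ℕ) = l + 1 := ⟨⟨l + 1, by omega⟩, rfl⟩
  have n1 : i ≠ j := by rw [Ne, Fin.ext_iff]; omega
  have n2 : i' ≠ j' := by rw [Ne, Fin.ext_iff]; omega
  have n3 : i ≠ i' := by rw [Ne, Fin.ext_iff]; omega
  have n4 : i ≠ j' := by rw [Ne, Fin.ext_iff]; omega
  have n5 : j ≠ i' := by rw [Ne, Fin.ext_iff]; omega
  have n6 : j ≠ j' := by rw [Ne, Fin.ext_iff]; omega
  have h1 : v i ≠ v j := fun h => n1 (hv h)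
  have h2 : v i' ≠ v j' := fun h => n2 (hv h)
  have e1 : Equiv.swap i j i' = i' := Equiv.swap_apply_of_ne_of_ne n3.symm n5.symm
  have e2 : Equiv.swap i j j' = j' := Equiv.swap_apply_of_ne_of_ne n4.symm n6.symm
  have e3 : Equiv.swap i' j' i = i := Equiv.swap_apply_of_ne_of_ne n3 n4
  have e4 : Equiv.swap i' j' j = j := Equiv.swap_apply_of_ne_of_ne n5 n6
  have e : (v ∘ Equiv.swap i j) ∘ Equiv.swap i' j' = (v ∘ Equiv.swap i' j') ∘ Equiv.swap i j := by
    have : Equiv.swap i j * Equiv.swap i' j' = Equiv.swap i' j' * Equiv.swap i j := by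
      apply Equiv.Perm.Disjoint.commute
      rw [Equiv.Perm.disjoint_iff_eq_or_eq]
      intro x
      by_cases hx : x = i
      · right; rw [hx, e3]
      · by_cases hx2 : x = j
        · right; rw [hx2, e4]
        · left; exact Equiv.swap_apply_of_ne_of_ne hx hx2
    ext x
    exact congrArg v (Equiv.congr_fun this x)
  rw [eval_T hT i j hi hj v h1, eval_T hT i' j' hi' hj' v h2,
    eval_T hT i' j' hi' hj' v h2, eval_T hT i j hi hj v h1,
    eval_T hT i' j' hi' hj' _ (by simpa [e1, e2] using h2),
    eval_T hT i j hi hj _ (by simpa [e3, e4] using h1), e]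
  simp only [Function.comp, e1, e2, e3, e4]
  ring

lemma T_braid (hT : IsDL n t T) {k : ℕ} (hk : k + 2 < n) (f : P n) :
    T k (T (k + 1) (T k f)) = T (k + 1) (T k (T (k + 1) f)) := by
  apply ext_gen
  intro v hv
  obtain ⟨a, ha⟩ : ∃ i : Fin n, (i : ℕ) = k := ⟨⟨k, by omega⟩, rfl⟩
  obtain ⟨b, hb⟩ : ∃ i : Fin n, (i : ℕ) = k + 1 := ⟨⟨k + 1, by omega⟩, rfl⟩
  obtain ⟨c, hc⟩ : ∃ i : Fin n, (i : ℕ) = k + 1 + 1 := ⟨⟨k + 2, by omega⟩, rfl⟩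
  have n1 : a ≠ b := by rw [Ne, Fin.ext_iff]; omega
  have n2 : b ≠ c := by rw [Ne, Fin.ext_iff]; omega
  have n3 : a ≠ c := by rw [Ne, Fin.ext_iff]; omega
  have e1 : Equiv.swap a b c = c := Equiv.swap_apply_of_ne_of_ne n3.symm n2.symm
  have e2 : Equiv.swap b c a = a := Equiv.swap_apply_of_ne_of_ne n1 n3
  have S1 : ∀ (w : Fin n → K), Function.Injective w → ∀ g : P n, eval w (T k g) =
      (t * w a - w b) / (w a - w b) * eval (w ∘ Equiv.swap a b) g
      + (1 - t) * w b / (w a - w b) * eval w g :=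
    fun w hw g => eval_T hT a b ha hb w (fun h => n1 (hw h)) g
  have S2 : ∀ (w : Fin n → K), Function.Injective w → ∀ g : P n, eval w (T (k + 1) g) =
      (t * w b - w c) / (w b - w c) * eval (w ∘ Equiv.swap b c) g
      + (1 - t) * w c / (w b - w c) * eval w g :=
    fun w hw g => eval_T hT b c hb hc w (fun h => n2 (hw h)) g
  have I : ∀ (w : Fin n → K), Function.Injective w → ∀ σ : Equiv.Perm (Fin n),
      Function.Injective (w ∘ σ) := fun w hw σ => hw.comp σ.injective
  have i1 := I v hv (Equiv.swap a b)
  have i2 := I v hv (Equiv.swap b c)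
  have i12 := I _ i1 (Equiv.swap b c)
  have i21 := I _ i2 (Equiv.swap a b)
  have b1 : (v ∘ Equiv.swap a b) ∘ Equiv.swap a b = v := by ext x; simp
  have b2 : (v ∘ Equiv.swap b c) ∘ Equiv.swap b c = v := by ext x; simp
  have b3 : ((v ∘ Equiv.swap a b) ∘ Equiv.swap b c) ∘ Equiv.swap a b =
      ((v ∘ Equiv.swap b c) ∘ Equiv.swap a b) ∘ Equiv.swap b c := by
    have : Equiv.swap a b * Equiv.swap b c * Equiv.swap a b =
        Equiv.swap b c * Equiv.swap a b * Equiv.swap b c := by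
      have p1 := Equiv.swap_mul_swap_mul_swap (x := c) (y := b) (z := a) n2.symm n3.symm
      have p2 := Equiv.swap_mul_swap_mul_swap (x := a) (y := b) (z := c) n1 n3
      rw [p2, Equiv.swap_comm a b, Equiv.swap_comm b c, p1, Equiv.swap_comm]
    ext x
    exact congrArg v (Equiv.congr_fun this x)
  rw [S1 v hv, S2 _ i1, S2 v hv, S1 _ i12, S1 _ i1, S1 _ i2, S1 v hv,
    S2 v hv, S1 _ i2, S1 v hv, S2 _ i21, S2 _ i2, S2 _ i1, S2 v hv, b1, b2, b3]
  simp only [Function.comp, e1, e2, Equiv.swap_apply_left, Equiv.swap_apply_right]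
  have d1 : v a - v b ≠ 0 := sub_ne_zero.mpr fun h => n1 (hv h)
  have d2 : v b - v c ≠ 0 := sub_ne_zero.mpr fun h => n2 (hv h)
  have d3 : v a - v c ≠ 0 := sub_ne_zero.mpr fun h => n3 (hv h)
  generalize eval _ f = F1
  generalize eval _ f = F2
  generalize eval _ f = F3
  generalize eval _ f = F4
  generalize eval _ f = F5
  generalize eval _ f = F6
  generalize v a = x at *
  generalize v b = y at *
  generalize v c = z at *
  have h5 : y - x = -(x - y) := by ring
  have h6 : z - y = -(y - z) := by ring
  rw [h5, h6]
  field_simp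
  ring

end
end Stmt10

namespace Stmt10

/-- the point at which f is evaluated when ω f is evaluated at v -/
noncomputable def rotv {n : ℕ} (h0 : 0 < n) (v : Fin n → K) : Fin n → K := fun j =>
  if (j : ℕ) = 0 then q * v ⟨n - 1, by omega⟩ else v ⟨(j : ℕ) - 1, by omega⟩

lemma eval_fold {n : ℕ} (m : ℕ) (hm : m < n) (v : Fin n → K) (f : P n) :
    eval v ((List.range m).foldl (fun acc k => sOp n k ∘ₗ acc) (tauOp n q) f) =
      eval (fun j : Fin n => if (j : ℕ) = 0 then q * v ⟨m, hm⟩ else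
        if (j : ℕ) ≤ m then v ⟨(j : ℕ) - 1, by omega⟩ else v j) f := by
  induction m generalizing v with
  | zero =>
    simp only [List.range_zero, List.foldl_nil, tauOp, AlgHom.toLinearMap_apply]
    rw [← MvPolynomial.coe_aeval_eq_eval, ← MvPolynomial.coe_aeval_eq_eval]
    simp only [RingHom.coe_coe]
    rw [← AlgHom.comp_apply, comp_aeval]
    congr 2
    funext j
    by_cases hj : (j : ℕ) = 0
    · have : j = ⟨0, hm⟩ := Fin.ext hj
      simp [this]
    · simp [hj]
  | succ m ih =>
    rw [List.range_succ, List.foldl_append, List.foldl_cons, List.foldl_nil, LinearMap.comp_apply,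
      eval_sOp hm, ih (by omega)]
    congr 2
    funext j
    simp only [Function.comp, Equiv.swap_apply_def, Fin.ext_iff]
    by_cases hj : (j : ℕ) = 0
    · simp [hj]
    · simp only [hj, if_false]
      by_cases h1 : (j : ℕ) ≤ m
      · rw [if_pos h1, if_neg (by omega), if_neg (by omega), if_pos (by omega)]
      · by_cases h2 : (j : ℕ) = m + 1
        · rw [if_neg h1, if_neg (by omega), if_pos h2, if_pos (by omega)]
          congr 1
          apply Fin.ext
          simp [h2]
        · rw [if_neg h1, if_neg (by omega), if_neg (by omega), if_neg (by omega)]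

lemma eval_omega {n : ℕ} (h0 : 0 < n) (v : Fin n → K) (f : P n) :
    eval v (omegaOp n q f) = eval (rotv h0 v) f := by
  rw [omegaOp, eval_fold (n - 1) (by omega)]
  congr 2
  funext j
  unfold rotv
  by_cases hj : (j : ℕ) = 0
  · simp [hj]
  · rw [if_neg hj, if_neg hj, if_pos (by omega)]

lemma omega_X_zero {n : ℕ} (h0 : 0 < n) (f : P n) :
    omegaOp n q (X ⟨0, h0⟩ * f) = q • (X ⟨n - 1, by omega⟩ * omegaOp n q f) := by
  apply MvPolynomial.funext
  intro v
  rw [eval_omega h0, smul_eval, map_mul, map_mul, eval_omega h0]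
  simp [rotv, mul_assoc]

lemma omega_X_succ {n : ℕ} (k : ℕ) (hk : k + 1 < n) (f : P n) :
    omegaOp n q (X ⟨k + 1, hk⟩ * f) = X ⟨k, by omega⟩ * omegaOp n q f := by
  have h0 : 0 < n := by omega
  apply MvPolynomial.funext
  intro v
  rw [eval_omega h0, map_mul, map_mul, eval_omega h0]
  simp [rotv]

lemma omega_one {n : ℕ} (h0 : 0 < n) : omegaOp n q (1 : P n) = 1 := by
  apply MvPolynomial.funext
  intro v
  rw [eval_omega h0]
  simp

section
variable {n : ℕ} {T : ℕ → P n →ₗ[K] P n} (hT : IsDL n t T)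

lemma omega_T (hT : IsDL n t T) {k : ℕ} (hk : k + 2 < n) (f : P n) :
    omegaOp n q (T (k + 1) f) = T k (omegaOp n q f) := by
  have h0 : 0 < n := by omega
  apply ext_gen
  intro v hv
  have n1 : v ⟨k, by omega⟩ ≠ v ⟨k + 1, by omega⟩ := fun h => by simpa using hv h
  rw [eval_omega h0, eval_T hT ⟨k, by omega⟩ ⟨k + 1, by omega⟩ rfl rfl v n1,
    eval_T hT ⟨k + 1, by omega⟩ ⟨k + 1 + 1, by omega⟩ rfl rfl (rotv h0 v) (by simpa [rotv] using n1),
    eval_omega h0, eval_omega h0]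
  have e : rotv h0 v ∘ Equiv.swap (⟨k + 1, by omega⟩ : Fin n) ⟨k + 1 + 1, by omega⟩ =
      rotv h0 (v ∘ Equiv.swap (⟨k, by omega⟩ : Fin n) ⟨k + 1, by omega⟩) := by
    funext j
    by_cases j1 : (j : ℕ) = k + 1
    · have hj : j = ⟨k + 1, by omega⟩ := Fin.ext j1
      rw [hj, Function.comp, Equiv.swap_apply_left]
      simp [rotv]
    by_cases j2 : (j : ℕ) = k + 1 + 1
    · have hj : j = ⟨k + 1 + 1, by omega⟩ := Fin.ext j2
      rw [hj, Function.comp, Equiv.swap_apply_right]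
      simp [rotv]
    rw [Function.comp, Equiv.swap_apply_of_ne_of_ne (by rwa [Ne, Fin.ext_iff])
      (by rwa [Ne, Fin.ext_iff])]
    simp only [rotv, Function.comp]
    by_cases hj : (j : ℕ) = 0
    · rw [if_pos hj, if_pos hj, Equiv.swap_apply_of_ne_of_ne]
      · rw [Ne, Fin.ext_iff]; simp; omega
      · rw [Ne, Fin.ext_iff]; simp; omega
    · rw [if_neg hj, if_neg hj, Equiv.swap_apply_of_ne_of_ne]
      · rw [Ne, Fin.ext_iff]; simp; omega
      · rw [Ne, Fin.ext_iff]; simp; omega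
  rw [e]
  simp [rotv]

lemma omega_omega_T (hT : IsDL n t T) (hn : 2 ≤ n) (f : P n) :
    omegaOp n q (omegaOp n q (T 0 f)) = T (n - 2) (omegaOp n q (omegaOp n q f)) := by
  have h0 : 0 < n := by omega
  apply ext_gen
  intro v hv
  have n1 : v ⟨n - 2, by omega⟩ ≠ v ⟨n - 1, by omega⟩ := fun h => by
    have := hv h
    simp at this
    omega
  have r0 : rotv h0 (rotv h0 v) ⟨0, by omega⟩ = q * v ⟨n - 2, by omega⟩ := by
    simp only [rotv, if_true]
    rw [if_neg (by omega)]
    rfl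
  have r1 : rotv h0 (rotv h0 v) ⟨1, by omega⟩ = q * v ⟨n - 1, by omega⟩ := by
    simp [rotv]
  rw [eval_omega h0, eval_omega h0,
    eval_T hT ⟨n - 2, by omega⟩ ⟨n - 1, by omega⟩ rfl (by simp; omega) v n1,
    eval_T hT ⟨0, by omega⟩ ⟨1, by omega⟩ rfl rfl (rotv h0 (rotv h0 v))
      (by rw [r0, r1]; exact fun h => n1 (mul_left_cancel₀ q_ne h)),
    eval_omega h0, eval_omega h0, eval_omega h0, eval_omega h0, r0, r1]
  have e : rotv h0 (rotv h0 v) ∘ Equiv.swap (⟨0, by omega⟩ : Fin n) ⟨1, by omega⟩ =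
      rotv h0 (rotv h0 (v ∘ Equiv.swap (⟨n - 2, by omega⟩ : Fin n) ⟨n - 1, by omega⟩)) := by
    funext j
    by_cases j0 : (j : ℕ) = 0
    · obtain rfl : j = ⟨0, h0⟩ := Fin.ext j0
      rw [Function.comp, Equiv.swap_apply_left, r1]
      simp only [rotv, if_true, Function.comp]
      rw [if_neg (by omega)]
      rw [show (⟨n - 1 - 1, by omega⟩ : Fin n) = ⟨n - 2, by omega⟩ from rfl, Equiv.swap_apply_left]
    by_cases j1 : (j : ℕ) = 1
    · have hj : j = ⟨1, by omega⟩ := Fin.ext j1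
      rw [hj, Function.comp, Equiv.swap_apply_right, r0]
      simp [rotv]
    rw [Function.comp, Equiv.swap_apply_of_ne_of_ne (by rwa [Ne, Fin.ext_iff])
      (by rwa [Ne, Fin.ext_iff])]
    simp only [rotv, if_neg j0, Function.comp]
    rw [if_neg (by omega), if_neg (by omega), Equiv.swap_apply_of_ne_of_ne]
    · rw [Ne, Fin.ext_iff]; simp; omega
    · rw [Ne, Fin.ext_iff]; simp; omega
  rw [e]
  have d := sub_ne_zero.mpr n1
  have qn := q_ne
  have s1 : (t * (q * v ⟨n - 2, by omega⟩) - q * v ⟨n - 1, by omega⟩) /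
      (q * v ⟨n - 2, by omega⟩ - q * v ⟨n - 1, by omega⟩) =
      (t * v ⟨n - 2, by omega⟩ - v ⟨n - 1, by omega⟩) /
      (v ⟨n - 2, by omega⟩ - v ⟨n - 1, by omega⟩) := by
    rw [← mul_sub, show t * (q * v ⟨n - 2, by omega⟩) - q * v ⟨n - 1, by omega⟩ =
      q * (t * v ⟨n - 2, by omega⟩ - v ⟨n - 1, by omega⟩) by ring, mul_div_mul_left _ _ qn]
  have s2 : (1 - t) * (q * v ⟨n - 1, by omega⟩) /
      (q * v ⟨n - 2, by omega⟩ - q * v ⟨n - 1, by omega⟩) =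
      (1 - t) * v ⟨n - 1, by omega⟩ /
      (v ⟨n - 2, by omega⟩ - v ⟨n - 1, by omega⟩) := by
    rw [← mul_sub, show (1 - t) * (q * v ⟨n - 1, by omega⟩) =
      q * ((1 - t) * v ⟨n - 1, by omega⟩) by ring, mul_div_mul_left _ _ qn]
  rw [s1, s2]

lemma T_X_far (hT : IsDL n t T) {k : ℕ} (hk : k + 1 < n) (j : Fin n) (h1 : (j : ℕ) ≠ k) (h2 : (j : ℕ) ≠ k + 1)
    (f : P n) : T k (X j * f) = X j * T k f := by
  apply ext_gen
  intro v hv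
  have n1 : v ⟨k, by omega⟩ ≠ v ⟨k + 1, by omega⟩ := fun h => by simpa using hv h
  rw [map_mul (eval v), eval_T hT ⟨k, by omega⟩ ⟨k + 1, by omega⟩ rfl rfl v n1,
    eval_T hT ⟨k, by omega⟩ ⟨k + 1, by omega⟩ rfl rfl v n1]
  simp only [map_mul, eval_X, Function.comp]
  rw [Equiv.swap_apply_of_ne_of_ne (by rwa [Ne, Fin.ext_iff]) (by rwa [Ne, Fin.ext_iff])]
  ring

lemma T_X (hT : IsDL n t T) {k : ℕ} (hk : k + 1 < n) (f : P n) :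
    T k (X ⟨k, by omega⟩ * f) = X ⟨k + 1, hk⟩ * (T k f + (1 - t) • f) := by
  apply ext_gen
  intro v hv
  have n1 : v ⟨k, by omega⟩ ≠ v ⟨k + 1, by omega⟩ := fun h => by simpa using hv h
  rw [map_mul (eval v), map_add (eval v), smul_eval, eval_T hT ⟨k, by omega⟩ ⟨k + 1, by omega⟩ rfl rfl v n1,
    eval_T hT ⟨k, by omega⟩ ⟨k + 1, by omega⟩ rfl rfl v n1]
  simp only [map_mul, eval_X, Function.comp, Equiv.swap_apply_left]
  have d := sub_ne_zero.mpr n1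
  field_simp
  ring

lemma T_one (hT : IsDL n t T) {k : ℕ} (hk : k + 1 < n) : T k 1 = t • (1 : P n) := by
  apply ext_gen
  intro v hv
  have n1 : v ⟨k, by omega⟩ ≠ v ⟨k + 1, by omega⟩ := fun h => by simpa using hv h
  rw [eval_T hT ⟨k, by omega⟩ ⟨k + 1, by omega⟩ rfl rfl v n1]
  simp only [map_one, smul_eval]
  have d := sub_ne_zero.mpr n1
  field_simp
  ring

lemma eval_pt_T (hT : IsDL n t T) {k : ℕ} (hk : k + 1 < n) (f : P n) :
    eval (fun i : Fin n => t ^ (i : ℕ)) (T k f) = t * eval (fun i : Fin n => t ^ (i : ℕ)) f := by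
  have n1 : t ^ k ≠ t ^ (k + 1) := fun h => by
    have := (qt_inj (a := 0) (c := 0) (b := k) (d := k + 1) (by rw [h])).2
    omega
  rw [eval_T hT ⟨k, by omega⟩ ⟨k + 1, by omega⟩ rfl rfl _ n1]
  have d := sub_ne_zero.mpr n1
  simp only
  rw [show t * t ^ k - t ^ (k + 1) = 0 by ring, zero_div, zero_mul, zero_add]
  rw [show (1 - t) * t ^ (k + 1) = t * (t ^ k - t ^ (k + 1)) by ring, mul_div_cancel_right₀ _ d]

end
end Stmt10

namespace Stmt10

/-- multiplication by x_j as an operator -/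
noncomputable def Xm {n : ℕ} (j : ℕ) (hj : j < n) : Module.End K (P n) :=
  LinearMap.mulLeft K (X ⟨j, hj⟩)

/-- ω as an element of the endomorphism ring -/
noncomputable def Wo (n : ℕ) : Module.End K (P n) := omegaOp n q

noncomputable def Lp {n : ℕ} (T : ℕ → Module.End K (P n)) (a m : ℕ) : Module.End K (P n) :=
  (List.range' a m).foldr (fun k acc => T k ∘ₗ acc) LinearMap.id

noncomputable def Ti {n : ℕ} (T : ℕ → Module.End K (P n)) (k : ℕ) : Module.End K (P n) :=
  Tinv n t T k

noncomputable def Rp {n : ℕ} (T : ℕ → Module.End K (P n)) (j : ℕ) : Module.End K (P n) :=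
  (List.range j).foldr (fun k acc => Tinv n t T k ∘ₗ acc) LinearMap.id

noncomputable def Yv {n : ℕ} (T : ℕ → Module.End K (P n)) (j : ℕ) : Module.End K (P n) :=
  (t ^ (n - 1 - j))⁻¹ • (Lp T j (n - 1 - j) * Wo n * Rp T j)

lemma Yop_eq {n : ℕ} (T : ℕ → Module.End K (P n)) (i : Fin n) :
    Yop n q t T i = Yv T i := rfl

lemma foldr_end {n : ℕ} (T : ℕ → Module.End K (P n)) (l : List ℕ) (g : Module.End K (P n)) :
    l.foldr (fun k acc => T k ∘ₗ acc) g =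
      (l.foldr (fun k acc => T k ∘ₗ acc) LinearMap.id : Module.End K (P n)) * g := by
  induction l with
  | nil => rfl
  | cons a l ih =>
    simp only [List.foldr_cons]
    rw [ih]
    rfl

section
variable {n : ℕ} {T : ℕ → Module.End K (P n)}

lemma Lp_zero (a : ℕ) : Lp T a 0 = 1 := rfl

lemma Lp_succ (a m : ℕ) : Lp T a (m + 1) = T a * Lp T (a + 1) m := rfl

lemma Lp_snoc (a m : ℕ) : Lp T a (m + 1) = Lp T a m * T (a + m) := by
  unfold Lp
  rw [List.range'_concat, List.foldr_append, foldr_end]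
  simp

lemma Rp_zero : Rp T 0 = 1 := rfl

lemma Rp_succ (j : ℕ) : Rp T (j + 1) = Rp T j * Ti T j := by
  unfold Rp
  rw [List.range_succ, List.foldr_append]
  exact foldr_end (Tinv n t T) _ _

lemma Ti_eq (k : ℕ) : Ti T k = t⁻¹ • (T k + (1 - t) • 1) := by
  have ht := t_ne
  have : (t⁻¹ * (1 - t)) = t⁻¹ - 1 := by field_simp
  apply LinearMap.ext
  intro f
  show t⁻¹ • f - f + t⁻¹ • T k f = t⁻¹ • (T k f + (1 - t) • f)
  rw [smul_add, smul_smul, this, sub_smul, one_smul, add_comm]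

section
variable (hT : IsDL n t T)

lemma T_sq (hT : IsDL n t T) {k : ℕ} (hk : k + 1 < n) : T k * T k = (t - 1) • T k + t • 1 :=
  LinearMap.ext fun f => T_quad hT hk f

lemma T_mul_Ti (hT : IsDL n t T) {k : ℕ} (hk : k + 1 < n) : T k * Ti T k = 1 := by
  rw [Ti_eq, mul_smul_comm, mul_add, T_sq hT hk, mul_smul_comm, mul_one, add_right_comm, ← add_smul,
    show t - 1 + (1 - t) = 0 by ring, zero_smul, zero_add, smul_smul, inv_mul_cancel₀ t_ne, one_smul]

lemma Ti_mul_T (hT : IsDL n t T) {k : ℕ} (hk : k + 1 < n) : Ti T k * T k = 1 := by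
  rw [Ti_eq, smul_mul_assoc, add_mul, T_sq hT hk, smul_mul_assoc, one_mul, add_right_comm,
    ← add_smul,
    show t - 1 + (1 - t) = 0 by ring, zero_smul, zero_add, smul_smul, inv_mul_cancel₀ t_ne, one_smul]

lemma T_comm (hT : IsDL n t T) {k l : ℕ} (h : k + 1 < l) (hl : l + 1 < n) : Commute (T k) (T l) :=
  LinearMap.ext fun f => T_far hT h hl f

lemma T_br (hT : IsDL n t T) {k : ℕ} (hk : k + 2 < n) : T k * T (k + 1) * T k = T (k + 1) * T k * T (k + 1) :=
  LinearMap.ext fun f => T_braid hT hk f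

lemma comm_Ti {a : Module.End K (P n)} {k : ℕ} (h : Commute a (T k)) : Commute a (Ti T k) := by
  rw [Ti_eq]
  exact (h.add_right ((Commute.one_right a).smul_right _)).smul_right _

lemma W_T (hT : IsDL n t T) {k : ℕ} (hk : k + 2 < n) : Wo n * T (k + 1) = T k * Wo n :=
  LinearMap.ext fun f => omega_T hT hk f

lemma W_Ti (hT : IsDL n t T) {k : ℕ} (hk : k + 2 < n) : Wo n * Ti T (k + 1) = Ti T k * Wo n := by
  rw [Ti_eq, Ti_eq, mul_smul_comm, smul_mul_assoc, mul_add, add_mul, W_T hT hk, mul_smul_comm,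
    smul_mul_assoc, mul_one, one_mul]

lemma WW_T (hT : IsDL n t T) (hn : 2 ≤ n) : Wo n * Wo n * T 0 = T (n - 2) * (Wo n * Wo n) :=
  LinearMap.ext fun f => omega_omega_T hT hn f

lemma WW_Ti (hT : IsDL n t T) (hn : 2 ≤ n) : Wo n * Wo n * Ti T 0 = Ti T (n - 2) * (Wo n * Wo n) := by
  rw [Ti_eq, Ti_eq, mul_smul_comm, smul_mul_assoc, mul_add, add_mul, WW_T hT hn, mul_smul_comm,
    smul_mul_assoc, mul_one, one_mul]

lemma Xm_far (hT : IsDL n t T) {k j : ℕ} (hk : k + 1 < n) (hj : j < n) (h1 : j ≠ k) (h2 : j ≠ k + 1) :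
    Commute (Xm j hj) (T k) :=
  LinearMap.ext fun f => (T_X_far hT hk ⟨j, hj⟩ h1 h2 f).symm

lemma T_Xm (hT : IsDL n t T) {k : ℕ} (hk : k + 1 < n) :
    T k * Xm k (by omega) = t • (Xm (k + 1) hk * Ti T k) := by
  rw [Ti_eq, mul_smul_comm, smul_smul, mul_inv_cancel₀ t_ne, one_smul]
  exact LinearMap.ext fun f => T_X hT hk f

lemma Ti_Xm (hT : IsDL n t T) {k : ℕ} (hk : k + 1 < n) :
    Ti T k * Xm (k + 1) hk = t⁻¹ • (Xm k (by omega) * T k) := by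
  have h := congrArg (fun a => Ti T k * a * T k) (T_Xm hT hk)
  simp only [mul_smul_comm, smul_mul_assoc] at h
  rw [← mul_assoc (Ti T k) (T k), Ti_mul_T hT hk, one_mul, mul_assoc (Ti T k),
    mul_assoc (Xm _ _) (Ti T k), Ti_mul_T hT hk, mul_one] at h
  rw [h, smul_smul, inv_mul_cancel₀ t_ne, one_smul]

lemma W_Xm_zero (h0 : 0 < n) : Wo n * Xm 0 h0 = q • (Xm (n - 1) (by omega) * Wo n) :=
  LinearMap.ext fun f => omega_X_zero h0 f

lemma W_Xm_succ {k : ℕ} (hk : k + 1 < n) : Wo n * Xm (k + 1) hk = Xm k (by omega) * Wo n :=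
  LinearMap.ext fun f => omega_X_succ k hk f

lemma Y_rec (hT : IsDL n t T) {j : ℕ} (hj : j + 1 < n) : Yv T j = t⁻¹ • (T j * Yv T (j + 1) * T j) := by
  unfold Yv
  have e : n - 1 - j = (n - 1 - (j + 1)) + 1 := by omega
  rw [e, Lp_succ, Rp_succ, mul_smul_comm, smul_mul_assoc, smul_smul, ← mul_inv, ← pow_succ']
  congr 1
  simp only [mul_assoc]
  rw [Ti_mul_T hT hj, mul_one]

lemma Y_rec' (hT : IsDL n t T) {j : ℕ} (hj : j + 1 < n) : Yv T (j + 1) = t • (Ti T j * Yv T j * Ti T j) := by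
  rw [Y_rec hT hj, mul_smul_comm, smul_mul_assoc, smul_smul, mul_inv_cancel₀ t_ne, one_smul]
  simp only [mul_assoc]
  rw [T_mul_Ti hT hj, ← mul_assoc (Ti T j), Ti_mul_T hT hj]
  simp

lemma T_Lp_far (hT : IsDL n t T) {k : ℕ} (m a : ℕ) (hk : k + 1 < a) (ha : a + m + 1 ≤ n) :
    Commute (T k) (Lp T a m) := by
  induction m generalizing a with
  | zero => exact Commute.one_right _
  | succ m ih =>
    rw [Lp_succ]
    exact (T_comm hT hk (by omega)).mul_right (ih (a + 1) (by omega) (by omega))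

lemma T_Lp (hT : IsDL n t T) {k : ℕ} (m a : ℕ) (hk : a ≤ k) (hk2 : k + 1 < a + m) (ha : a + m + 1 ≤ n) :
    T (k + 1) * Lp T a m = Lp T a m * T k := by
  induction m generalizing a with
  | zero => omega
  | succ m ih =>
    by_cases h : a = k
    · subst h
      obtain ⟨m, rfl⟩ : ∃ m', m = m' + 1 := ⟨m - 1, by omega⟩
      have h1 := T_br hT (k := a) (by omega)
      have h2 := T_Lp_far hT (k := a) m (a + 1 + 1) (by omega) (by omega)
      rw [Lp_succ, Lp_succ, mul_assoc, mul_assoc, ← h2.eq, ← mul_assoc, ← mul_assoc, ← h1]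
      simp only [mul_assoc]
    · have h2 := T_comm hT (k := a) (l := k + 1) (by omega) (by omega)
      rw [Lp_succ, ← mul_assoc, ← h2.eq, mul_assoc, ih (a + 1) (by omega) (by omega) (by omega),
        mul_assoc]

lemma T_Rp_far (hT : IsDL n t T) {k : ℕ} (j : ℕ) (hj : j < k) (hk : k + 1 < n) : Commute (T k) (Rp T j) := by
  induction j with
  | zero => exact Commute.one_right _
  | succ j ih =>
    rw [Rp_succ]
    exact (ih (by omega)).mul_right (comm_Ti (T_comm hT (by omega) (by omega)).symm)

lemma T_Ti_Ti (hT : IsDL n t T) {k : ℕ} (hk : k + 2 < n) :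
    T (k + 1) * (Ti T k * Ti T (k + 1)) = Ti T k * Ti T (k + 1) * T k := by
  have h := congrArg (fun a => Ti T k * Ti T (k + 1) * a * (Ti T k * Ti T (k + 1)))
    (T_br hT hk)
  simp only [mul_assoc] at h
  rw [← mul_assoc (Ti T (k + 1)) (T (k + 1)), Ti_mul_T hT hk, one_mul,
    ← mul_assoc (Ti T k) (T k), Ti_mul_T hT (by omega), one_mul,
    ← mul_assoc (T k) (Ti T k), T_mul_Ti hT (by omega), one_mul, T_mul_Ti hT (by omega), mul_one] at h
  rw [mul_assoc, h]

lemma T_Rp (hT : IsDL n t T) {k : ℕ} (j : ℕ) (hj : k + 1 < j) (hjn : j < n) :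
    T (k + 1) * Rp T j = Rp T j * T k := by
  induction j with
  | zero => omega
  | succ j ih =>
    by_cases h : j = k + 1
    · subst h
      have h1 := T_Rp_far hT (k := k + 1) k (by omega) (by omega)
      rw [Rp_succ, Rp_succ, mul_assoc, ← mul_assoc (T (k + 1)), h1.eq, mul_assoc, T_Ti_Ti hT hjn]
      simp only [mul_assoc]
    · have h2 := comm_Ti (T_comm hT (k := k) (l := j) (by omega) (by omega))
      rw [Rp_succ, ← mul_assoc, ih (by omega) (by omega), mul_assoc, h2.eq, mul_assoc]

lemma Y_comm_up (hT : IsDL n t T) {k : ℕ} (hk : k + 1 < n) (j : ℕ) (hj : j < k) : Commute (T k) (Yv T j) := by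
  induction j with
  | zero =>
    obtain ⟨k, rfl⟩ : ∃ m, k = m + 1 := ⟨k - 1, by omega⟩
    unfold Yv
    apply Commute.smul_right
    rw [Rp_zero, mul_one]
    show _ * _ = _ * _
    rw [← mul_assoc, T_Lp hT _ _ (by omega) (by omega) (by omega), mul_assoc, ← W_T hT hk, mul_assoc]
  | succ j ih =>
    have h := comm_Ti (T_comm hT (k := j) (l := k) (by omega) (by omega)).symm
    rw [Y_rec' hT (by omega)]
    exact ((h.mul_right (ih (by omega))).mul_right h).smul_right _

lemma Y_comm_down (hT : IsDL n t T) {k : ℕ} (i j : ℕ) (hij : j + i + 1 = n) (hj : k + 1 < j) :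
    Commute (T k) (Yv T j) := by
  induction i generalizing j with
  | zero =>
    have hn : n - 1 - j = 0 := by omega
    unfold Yv
    apply Commute.smul_right
    rw [hn, Lp_zero, one_mul]
    show _ * _ = _ * _
    rw [← mul_assoc, ← W_T hT (by omega), mul_assoc, T_Rp hT _ (by omega) (by omega), mul_assoc]
  | succ i ih =>
    have h := T_comm hT (k := k) (l := j) (by omega) (by omega)
    rw [Y_rec hT (by omega)]
    exact ((h.mul_right (ih (j + 1) (by omega) (by omega))).mul_right h).smul_right _

/-- T_k commutes with Y_j for j ≠ k, k+1 -/
lemma Y_comm (hT : IsDL n t T) {k j : ℕ} (hk : k + 1 < n) (hj : j < n) (h1 : j ≠ k) (h2 : j ≠ k + 1) :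
    Commute (T k) (Yv T j) := by
  rcases Nat.lt_or_gt_of_ne h1 with h | h
  · exact Y_comm_up hT hk j h
  · exact Y_comm_down hT (n - 1 - j) j (by omega) (by omega)

end

/-- the raising operator Φ = x_n ω -/
noncomputable def Phi (h0 : 0 < n) : Module.End K (P n) := Xm (n - 1) (by omega) * Wo n

variable (hT : IsDL n t T)

lemma T_Phi (hT : IsDL n t T) (h0 : 0 < n) {k : ℕ} (hk : k + 2 < n) : T k * Phi h0 = Phi h0 * T (k + 1) := by
  unfold Phi
  rw [mul_assoc, W_T hT hk, ← mul_assoc, ← mul_assoc,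
    (Xm_far hT (k := k) (by omega) (by omega) (by omega) (by omega)).eq]

lemma Rp_Xm (hT : IsDL n t T) (j : ℕ) (hj : j < n) :
    Rp T j * Xm j hj = (t⁻¹) ^ j • (Xm 0 (by omega) * Lp T 0 j) := by
  induction j with
  | zero => simp [Rp_zero, Lp_zero]
  | succ j ih =>
    rw [Rp_succ, mul_assoc, Ti_Xm hT hj, mul_smul_comm, ← mul_assoc, ih (by omega), smul_mul_assoc,
      smul_smul, mul_assoc, Lp_snoc, Nat.zero_add, ← pow_succ']

lemma Y_last_Phi (hT : IsDL n t T) (h0 : 0 < n) : Yv T (n - 1) * Phi h0 = q • (Phi h0 * Yv T 0) := by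
  unfold Yv Phi
  rw [Nat.sub_self, Lp_zero, one_mul, pow_zero, inv_one, one_smul, Rp_zero, mul_one, mul_assoc,
    ← mul_assoc (Rp T (n - 1)), Rp_Xm hT, smul_mul_assoc, mul_smul_comm, mul_smul_comm,
    ← mul_assoc, ← mul_assoc, W_Xm_zero h0, smul_mul_assoc, smul_mul_assoc, smul_smul, smul_smul,
    Nat.sub_zero, inv_pow, mul_comm q]
  simp only [mul_assoc]

lemma WW_Rp (hT : IsDL n t T) (j : ℕ) (hj : j + 1 < n) :
    Wo n * Wo n * Rp T (j + 1) = Ti T (n - 2) * (Wo n * Rp T j * Wo n) := by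
  induction j with
  | zero =>
    rw [Rp_succ, Rp_zero, one_mul, mul_one, WW_Ti hT (by omega)]
  | succ j ih =>
    rw [Rp_succ, ← mul_assoc, ih (by omega), Rp_succ]
    simp only [mul_assoc]
    rw [W_Ti hT (by omega)]

lemma X_Rp_far (hT : IsDL n t T) (j i : ℕ) (hi : i < n) (hj : j < i) : Commute (Xm i hi) (Rp T j) := by
  induction j with
  | zero => exact Commute.one_right _
  | succ j ih =>
    rw [Rp_succ]
    exact (ih (by omega)).mul_right
      (comm_Ti (Xm_far hT (by omega) (by omega) (by omega) (by omega)))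

lemma Y_Phi (hT : IsDL n t T) (h0 : 0 < n) (i j : ℕ) (hij : j + i + 2 = n) :
    Yv T j * Phi h0 = Phi h0 * Yv T (j + 1) := by
  induction i generalizing j with
  | zero =>
    have hn : n = j + 2 := by omega
    subst hn
    have a1 : Yv T j = t⁻¹ • (T j * Wo (j + 2) * Rp T j) := by
      unfold Yv
      rw [show j + 2 - 1 - j = 0 + 1 by omega, Lp_succ, Lp_zero, mul_one, zero_add, pow_one]
    have a2 : Yv T (j + 1) = Wo (j + 2) * Rp T (j + 1) := by
      unfold Yv
      rw [show j + 2 - 1 - (j + 1) = 0 by omega, Lp_zero, one_mul, pow_zero, inv_one, one_smul]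
    have a3 := WW_Rp hT j (by omega)
    have a4 := X_Rp_far hT j (j + 1) (by omega) (by omega)
    have a5 := T_Xm hT (k := j) (by omega)
    have a6 := W_Xm_succ (n := j + 2) (k := j) (by omega)
    have a7 : Phi h0 = Xm (j + 1) (by omega) * Wo (j + 2) := rfl
    rw [a1, a2, a7]
    calc t⁻¹ • (T j * Wo (j + 2) * Rp T j) * (Xm (j + 1) (by omega) * Wo (j + 2))
        = t⁻¹ • (T j * (Wo (j + 2) * (Rp T j * Xm (j + 1) (by omega)) * Wo (j + 2))) := by
          rw [smul_mul_assoc]; simp only [mul_assoc]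
      _ = t⁻¹ • (T j * ((Wo (j + 2) * Xm (j + 1) (by omega)) * Rp T j * Wo (j + 2))) := by
          rw [← a4.eq]; simp only [mul_assoc]
      _ = t⁻¹ • ((T j * Xm j (by omega)) * (Wo (j + 2) * Rp T j * Wo (j + 2))) := by
          rw [a6]; simp only [mul_assoc]
      _ = Xm (j + 1) (by omega) * (Ti T j * (Wo (j + 2) * Rp T j * Wo (j + 2))) := by
          rw [a5, smul_mul_assoc, smul_smul, inv_mul_cancel₀ t_ne, one_smul]; simp only [mul_assoc]
      _ = Xm (j + 1) (by omega) * (Wo (j + 2) * Wo (j + 2) * Rp T (j + 1)) := by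
          rw [a3]; rfl
      _ = _ := by simp only [mul_assoc]
  | succ i ih =>
    have h := ih (j + 1) (by omega)
    have h2 := T_Phi hT h0 (k := j) (by omega)
    have e1 := Y_rec hT (j := j) (by omega)
    have e2 := Y_rec hT (j := j + 1) (by omega)
    calc Yv T j * Phi h0 = t⁻¹ • (T j * Yv T (j + 1) * (T j * Phi h0)) := by
          rw [e1, smul_mul_assoc]; simp only [mul_assoc]
      _ = t⁻¹ • (T j * (Yv T (j + 1) * Phi h0) * T (j + 1)) := by
          rw [h2]; simp only [mul_assoc]
      _ = t⁻¹ • ((T j * Phi h0) * Yv T (j + 1 + 1) * T (j + 1)) := by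
          rw [h]; simp only [mul_assoc]
      _ = Phi h0 * Yv T (j + 1) := by
          rw [h2, e2, mul_smul_comm]; simp only [mul_assoc]

end
end Stmt10

namespace Stmt10

/-- coefficient of x^ν -/
noncomputable def cf {n : ℕ} (f : P n) (ν : Fin n → ℕ) : K :=
  coeff (Finsupp.equivFunOnFinite.symm ν) f

lemma cf_add {n : ℕ} (f g : P n) (ν : Fin n → ℕ) : cf (f + g) ν = cf f ν + cf g ν := coeff_add _ _ _

lemma cf_smul {n : ℕ} (c : K) (f : P n) (ν : Fin n → ℕ) : cf (c • f) ν = c * cf f ν :=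
  coeff_smul _ _ _

lemma cf_ext {n : ℕ} {f g : P n} (h : ∀ ν, cf f ν = cf g ν) : f = g := by
  ext m
  have := h m
  unfold cf at this
  simpa using this

/-- replace the entries at i and j by a and b -/
def upd {n : ℕ} (i j : Fin n) (ν : Fin n → ℕ) (a b : ℕ) : Fin n → ℕ := fun x =>
  if x = i then a else if x = j then b else ν x

lemma string_lemma (t : K) (F G : ℕ → ℕ → K)
    (E1 : ∀ a b, G a (b + 1) - G (a + 1) b = t * F (b + 1) a - F b (a + 1) + (1 - t) * F (a + 1) b)
    (E2 : ∀ b, - G 0 b = - F b 0 + (1 - t) * F 0 b)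
    (E3 : ∀ a, G a 0 = t * F 0 a) (N M : ℕ)
    (h : ∀ a b, a + b = N → M < max a b → F a b = 0) :
    (∀ b a, a + b = N → M ≤ a → G a b = t * F b a) ∧
    (∀ a b, a + b = N → M < b → G a b = 0) := by
  constructor
  · intro b
    induction b with
    | zero => intro a _ _; exact E3 a
    | succ b ih =>
      intro a hab hM
      have e := E1 a b
      have z1 : F b (a + 1) = 0 := h _ _ (by omega) (by omega)
      rw [ih (a + 1) (by omega) (by omega), h (a + 1) b (by omega) (by omega), z1] at e
      linear_combination e
  · intro a
    induction a with
    | zero =>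
      intro b hab hM
      have e := E2 b
      rw [h b 0 (by omega) (by omega), h 0 b (by omega) (by omega)] at e
      linear_combination -e
    | succ a ih =>
      intro b hab hM
      have e := E1 a b
      rw [ih (b + 1) (by omega) (by omega), h (b + 1) a (by omega) (by omega),
        h b (a + 1) (by omega) (by omega), h (a + 1) b (by omega) (by omega)] at e
      linear_combination -e

section
variable {n : ℕ} {T : ℕ → P n →ₗ[K] P n} (hT : IsDL n t T)

lemma symm_upd {i j : Fin n} (hij : i ≠ j) (ν : Fin n → ℕ) (a b : ℕ) :
    Finsupp.equivFunOnFinite.symm (upd i j ν a b) =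
      Finsupp.single i a + (Finsupp.single j b + Finsupp.equivFunOnFinite.symm (upd i j ν 0 0)) := by
  ext x
  simp only [Finsupp.add_apply, Finsupp.single_apply, Finsupp.coe_equivFunOnFinite_symm, upd]
  by_cases h1 : x = i
  · subst h1; simp [hij.symm]
  · by_cases h2 : x = j
    · subst h2; simp [hij, h1]
    · simp [h1, h2, Ne.symm h1, Ne.symm h2]

lemma cf_Xi_succ {i j : Fin n} (hij : i ≠ j) (ν : Fin n → ℕ) (a b : ℕ) (f : P n) :
    cf (X i * f) (upd i j ν (a + 1) b) = cf f (upd i j ν a b) := by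
  unfold cf
  rw [symm_upd hij, symm_upd hij ν a, add_comm a 1, Finsupp.single_add, add_assoc, coeff_X_mul]

lemma cf_Xj_succ {i j : Fin n} (hij : i ≠ j) (ν : Fin n → ℕ) (a b : ℕ) (f : P n) :
    cf (X j * f) (upd i j ν a (b + 1)) = cf f (upd i j ν a b) := by
  unfold cf
  rw [symm_upd hij, symm_upd hij ν a b, add_comm b 1, Finsupp.single_add,
    add_left_comm, add_assoc, coeff_X_mul, add_left_comm]

lemma cf_X_zero {i : Fin n} (ν : Fin n → ℕ) (h : ν i = 0) (f : P n) :
    cf (X i * f) ν = 0 := by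
  unfold cf
  rw [coeff_X_mul', if_neg]
  simp [h]

lemma cf_sOp {k : ℕ} (i j : Fin n) (hi : (i : ℕ) = k) (hj : (j : ℕ) = k + 1) (ν : Fin n → ℕ)
    (a b : ℕ) (f : P n) :
    cf (sOp n k f) (upd i j ν a b) = cf f (upd i j ν b a) := by
  have hk : k + 1 < n := hj ▸ j.2
  obtain rfl : i = ⟨k, Nat.lt_of_succ_lt hk⟩ := Fin.ext hi
  obtain rfl : j = ⟨k + 1, hk⟩ := Fin.ext hj
  set i : Fin n := ⟨k, Nat.lt_of_succ_lt hk⟩ with hi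
  set j : Fin n := ⟨k + 1, hk⟩ with hj
  have hij : i ≠ j := by simp [hi, hj]
  have e : Finsupp.equivFunOnFinite.symm (upd i j ν a b) =
      (Finsupp.equivFunOnFinite.symm (upd i j ν b a)).mapDomain (Equiv.swap i j) := by
    ext x
    rw [Finsupp.mapDomain_equiv_apply]
    simp only [Finsupp.coe_equivFunOnFinite_symm, upd, Equiv.symm_swap]
    by_cases h1 : x = i
    · subst h1; simp [hij.symm]
    · by_cases h2 : x = j
      · subst h2; simp [hij.symm]
      · rw [Equiv.swap_apply_of_ne_of_ne h1 h2]; simp [h1, h2]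
  unfold cf
  rw [e]
  simp only [sOp, dif_pos hk, AlgHom.toLinearMap_apply]
  exact coeff_rename_mapDomain _ (Equiv.injective _) _ _


lemma cf_T_string (hT : IsDL n t T) {k : ℕ} (i j : Fin n) (hi : (i : ℕ) = k) (hj : (j : ℕ) = k + 1) (ν : Fin n → ℕ)
    (f : P n) (N M : ℕ)
    (h : ∀ a b, a + b = N → M < max a b → cf f (upd i j ν a b) = 0) :
    (∀ b a, a + b = N → M ≤ a → cf (T k f) (upd i j ν a b) = t * cf f (upd i j ν b a)) ∧
    (∀ a b, a + b = N → M < b → cf (T k f) (upd i j ν a b) = 0) := by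
  have hk : k + 1 < n := hj ▸ j.2
  have hij : i ≠ j := by rw [Ne, Fin.ext_iff]; omega
  have key : X i * T k f + (-1 : K) • (X j * T k f) =
      t • (X i * sOp n k f) + (-1 : K) • (X j * sOp n k f) + (1 - t) • (X j * f) := by
    have := hT k hk f
    obtain rfl : i = ⟨k, Nat.lt_of_succ_lt hk⟩ := Fin.ext hi
    obtain rfl : j = ⟨k + 1, hk⟩ := Fin.ext hj
    simp only [smul_eq_C_mul, map_sub, map_neg, map_one]
    linear_combination this
  have u0 : ∀ b, upd i j ν 0 b i = 0 := fun b => by simp [upd]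
  have v0 : ∀ a, upd i j ν a 0 j = 0 := fun b => by simp [upd, hij.symm]
  apply string_lemma t (fun a b => cf f (upd i j ν a b)) (fun a b => cf (T k f) (upd i j ν a b))
  · intro a b
    have := congrArg (fun g => cf g (upd i j ν (a + 1) (b + 1))) key
    simp only [cf_add, cf_smul, cf_Xi_succ hij, cf_Xj_succ hij, cf_sOp i j hi hj] at this
    linear_combination this
  · intro b
    have := congrArg (fun g => cf g (upd i j ν 0 (b + 1))) key
    simp only [cf_add, cf_smul, cf_Xj_succ hij, cf_sOp i j hi hj, cf_X_zero _ (u0 _)] at this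
    linear_combination this
  · intro a
    have := congrArg (fun g => cf g (upd i j ν (a + 1) 0)) key
    simp only [cf_add, cf_smul, cf_Xi_succ hij, cf_sOp i j hi hj, cf_X_zero _ (v0 _)] at this
    linear_combination this
  · exact h

lemma upd_self (i j : Fin n) (ν : Fin n → ℕ) : upd i j ν (ν i) (ν j) = ν := by
  funext x
  unfold upd
  split_ifs with h1 h2
  · rw [h1]
  · rw [h2]
  · rfl

lemma cf_T_supp (hT : IsDL n t T) {k : ℕ} (i j : Fin n) (hi : (i : ℕ) = k) (hj : (j : ℕ) = k + 1) (ν : Fin n → ℕ)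
    (f : P n) (h : cf (T k f) ν ≠ 0) :
    ∃ a b, a + b = ν i + ν j ∧ max (ν i) (ν j) ≤ max a b ∧ cf f (upd i j ν a b) ≠ 0 := by
  by_contra! hc
  apply h
  have hs := fun M (hM : M + 1 = max (ν i) (ν j)) =>
    cf_T_string hT i j hi hj ν f (ν i + ν j) M (fun a b hab hm => hc a b hab (by omega))
  have he := upd_self i j ν
  rcases Nat.eq_zero_or_pos (max (ν i) (ν j)) with h0 | h0
  · have := (cf_T_string hT i j hi hj ν f (ν i + ν j) 0
      (fun a b hab hm => hc a b hab (by omega))).1 (ν j) (ν i) rfl (by omega)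
    rw [he, hc _ _ (by omega) (by omega), mul_zero] at this
    exact this
  · obtain ⟨M, hM⟩ : ∃ M, M + 1 = max (ν i) (ν j) := ⟨max (ν i) (ν j) - 1, by omega⟩
    obtain ⟨s1, s2⟩ := hs M hM
    by_cases hm : M < ν j
    · have := s2 (ν i) (ν j) rfl hm
      rwa [he] at this
    · have := s1 (ν j) (ν i) rfl (by omega)
      rw [he, hc _ _ (by omega) (by omega), mul_zero] at this
      exact this

end

/-- counting function defining the Bruhat type order -/
def rk {n : ℕ} (p m : ℕ) (ν : Fin n → ℕ) : ℕ := ∑ x : Fin n, (ν x + (if (x : ℕ) < p then 1 else 0) - m)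

/-- Bruhat type order on compositions -/
def Ble {n : ℕ} (ν η : Fin n → ℕ) : Prop := ∑ x, ν x = ∑ x, η x ∧ ∀ p m, rk p m ν ≤ rk p m η

lemma sum_two {n : ℕ} {i j : Fin n} (hij : i ≠ j) (g : Fin n → ℕ) :
    ∑ x, g x = g i + g j + ∑ x ∈ (univ.erase i).erase j, g x := by
  rw [← Finset.add_sum_erase univ g (mem_univ i),
    ← Finset.add_sum_erase (univ.erase i) g (a := j) (by simp [hij.symm]), add_assoc]

/-- part of the counting function away from i, j -/
def rest {n : ℕ} (i j : Fin n) (p m : ℕ) (ν : Fin n → ℕ) : ℕ :=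
  ∑ x ∈ (univ.erase i).erase j, (ν x + (if (x : ℕ) < p then 1 else 0) - m)

lemma rk_split {n : ℕ} {i j : Fin n} (hij : i ≠ j) (p m : ℕ) (ν : Fin n → ℕ) :
    rk p m ν = (ν i + (if (i : ℕ) < p then 1 else 0) - m) +
      (ν j + (if (j : ℕ) < p then 1 else 0) - m) + rest i j p m ν :=
  sum_two hij _

lemma rest_congr {n : ℕ} {i j : Fin n} (p m : ℕ) {ν μ : Fin n → ℕ}
    (h : ∀ x, x ≠ i → x ≠ j → ν x = μ x) : rest i j p m ν = rest i j p m μ := by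
  apply Finset.sum_congr rfl
  intro x hx
  simp only [mem_erase, mem_univ, and_true] at hx
  rw [h x hx.2 hx.1]

lemma rest_p {n : ℕ} {i j : Fin n} {k : ℕ} (hi : (i : ℕ) = k) (hj : (j : ℕ) = k + 1) (m : ℕ)
    (ν : Fin n → ℕ) : rest i j k m ν = rest i j (k + 1) m ν ∧
      rest i j (k + 2) m ν = rest i j (k + 1) m ν := by
  constructor
  all_goals
    apply Finset.sum_congr rfl
    intro x hx
    simp only [mem_erase, mem_univ, and_true, ne_eq, Fin.ext_iff] at hx
    congr 2
    apply if_congr _ rfl rfl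
    omega

lemma Ble_T {n k : ℕ} (i j : Fin n) (hi : (i : ℕ) = k) (hj : (j : ℕ) = k + 1)
    {ν ν' η η' : Fin n → ℕ} (h : Ble ν η) (hlt : η i < η j)
    (e1 : η' i = η j) (e2 : η' j = η i) (e3 : ∀ x, x ≠ i → x ≠ j → η' x = η x)
    (f1 : ∀ x, x ≠ i → x ≠ j → ν' x = ν x) (f2 : ν' i + ν' j = ν i + ν j)
    (f3 : max (ν' i) (ν' j) ≤ max (ν i) (ν j)) : Ble ν' η' := by
  have hij : i ≠ j := by rw [Ne, Fin.ext_iff]; omega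
  constructor
  · have := h.1
    rw [sum_two hij] at this ⊢
    rw [sum_two hij η] at this
    rw [sum_two hij η', e1, e2]
    have A : ∑ x ∈ (univ.erase i).erase j, ν' x = ∑ x ∈ (univ.erase i).erase j, ν x := by
      apply Finset.sum_congr rfl
      intro x hx
      simp only [mem_erase, mem_univ, and_true] at hx
      exact f1 x hx.2 hx.1
    have B : ∑ x ∈ (univ.erase i).erase j, η' x = ∑ x ∈ (univ.erase i).erase j, η x := by
      apply Finset.sum_congr rfl
      intro x hx
      simp only [mem_erase, mem_univ, and_true] at hx
      exact e3 x hx.2 hx.1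
    omega
  · intro p m
    have A := rest_congr p m f1
    have B := rest_congr p m e3
    rw [rk_split hij, rk_split hij p m η', A, B, e1, e2]
    by_cases hp : p = k + 1
    · subst hp
      have h0 := h.2 k m
      have h1 := h.2 (k + 1) m
      have h2 := h.2 (k + 2) m
      rw [rk_split hij, rk_split hij k m η] at h0
      rw [rk_split hij, rk_split hij _ m η] at h1
      rw [rk_split hij, rk_split hij _ m η] at h2
      rw [(rest_p hi hj m ν).1, (rest_p hi hj m η).1] at h0
      rw [(rest_p hi hj m ν).2, (rest_p hi hj m η).2] at h2
      simp only [hi, hj] at h0 h1 h2 ⊢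
      simp only [lt_irrefl, if_false, Nat.lt_succ_self, if_true, 
        show ¬ (k + 1 < k) by omega, show k < k + 2 by omega, show k + 1 < k + 2 by omega] at h0 h1 h2 ⊢
      omega
    · have h0 := h.2 p m
      rw [rk_split hij, rk_split hij p m η] at h0
      have : (if (i : ℕ) < p then 1 else 0) = (if (j : ℕ) < p then 1 else 0) := by
        apply if_congr _ rfl rfl
        omega
      rw [this] at h0 ⊢
      generalize (if (j : ℕ) < p then 1 else 0) = e at *
      omega

lemma not_Ble_swap {n k : ℕ} (i j : Fin n) (hi : (i : ℕ) = k) (hj : (j : ℕ) = k + 1)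
    {η η' : Fin n → ℕ} (hlt : η i < η j)
    (e1 : η' i = η j) (e2 : η' j = η i) (e3 : ∀ x, x ≠ i → x ≠ j → η' x = η x) : ¬ Ble η' η := by
  have hij : i ≠ j := by rw [Ne, Fin.ext_iff]; omega
  intro h
  have h1 := h.2 (k + 1) (η j)
  rw [rk_split hij, rk_split hij _ _ η, rest_congr _ _ e3, e1, e2, hi, hj] at h1
  simp at h1
  omega

lemma not_Ble_long {n : ℕ} (i j : Fin n) (hij : i ≠ j)
    {η : Fin n → ℕ} (hlt : η i < η j) (a b : ℕ) (h : η j < max a b) : ¬ Ble (upd i j η a b) η := by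
  intro hb
  have h1 := hb.2 0 (η j)
  rw [rk_split hij, rk_split hij _ _ η, rest_congr (μ := η) _ _ (by intro x h1 h2; simp [upd, h1, h2])] at h1
  simp [upd, hij.symm] at h1
  omega

lemma Ble_refl {n : ℕ} (ν : Fin n → ℕ) : Ble ν ν := ⟨rfl, fun _ _ => le_rfl⟩

end Stmt10

namespace Stmt10

/-- the affine move (ν_0,…,ν_N) ↦ (ν_1,…,ν_N,ν_0+1) -/
def up {N : ℕ} (ν : Fin (N + 1) → ℕ) : Fin (N + 1) → ℕ :=
  Fin.lastCases (ν 0 + 1) (fun j => ν j.succ)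

@[simp] lemma up_last {N : ℕ} (ν : Fin (N + 1) → ℕ) : up ν (Fin.last N) = ν 0 + 1 := by
  simp [up]

@[simp] lemma up_castSucc {N : ℕ} (ν : Fin (N + 1) → ℕ) (j : Fin N) : up ν j.castSucc = ν j.succ := by
  simp [up]

lemma up_inj {N : ℕ} {ν μ : Fin (N + 1) → ℕ} (h : up ν = up μ) : ν = μ := by
  funext x
  refine Fin.cases ?_ (fun j => ?_) x
  · have := congrFun h (Fin.last N)
    simpa using this
  · have := congrFun h j.castSucc
    simpa using this

lemma exists_up {N : ℕ} (μ : Fin (N + 1) → ℕ) (h : 0 < μ (Fin.last N)) : ∃ ν, up ν = μ := by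
  refine ⟨Fin.cases (μ (Fin.last N) - 1) (fun j => μ j.castSucc), ?_⟩
  funext x
  refine Fin.lastCases ?_ (fun j => ?_) x
  · simp; omega
  · simp

lemma rotv_zero {N : ℕ} (v : Fin (N + 1) → K) : rotv (Nat.succ_pos N) v 0 = q * v (Fin.last N) := by
  simp [rotv, Fin.last]

lemma rotv_succ {N : ℕ} (v : Fin (N + 1) → K) (j : Fin N) :
    rotv (Nat.succ_pos N) v j.succ = v j.castSucc := by
  simp [rotv, Fin.castSucc, Fin.castAdd, Fin.castLE]

lemma Phi_monomial {N : ℕ} (ν : Fin (N + 1) → ℕ) (c : K) :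
    Phi (Nat.succ_pos N) (monomial (Finsupp.equivFunOnFinite.symm ν) c) =
      monomial (Finsupp.equivFunOnFinite.symm (up ν)) (q ^ ν 0 * c) := by
  apply MvPolynomial.funext
  intro v
  have e : Phi (Nat.succ_pos N) (monomial (Finsupp.equivFunOnFinite.symm ν) c) =
    X (Fin.last N) * omegaOp (N + 1) q (monomial (Finsupp.equivFunOnFinite.symm ν) c) := rfl
  rw [e, map_mul, eval_X, eval_omega (Nat.succ_pos N), eval_monomial, eval_monomial,
    Finsupp.prod_fintype _ _ (by simp), Finsupp.prod_fintype _ _ (by simp),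
    Fin.prod_univ_succ, Fin.prod_univ_castSucc]
  simp only [Finsupp.coe_equivFunOnFinite_symm, up_last, up_castSucc, rotv_zero, rotv_succ]
  ring

lemma cf_Phi_up {N : ℕ} (f : P (N + 1)) (ν : Fin (N + 1) → ℕ) :
    cf (Phi (Nat.succ_pos N) f) (up ν) = q ^ ν 0 * cf f ν := by
  induction f using MvPolynomial.induction_on' with
  | monomial s c =>
    obtain ⟨μ, rfl⟩ : ∃ μ, Finsupp.equivFunOnFinite.symm μ = s := ⟨s, by simp⟩
    rw [Phi_monomial]
    unfold cf
    rw [coeff_monomial, coeff_monomial]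
    simp only [EmbeddingLike.apply_eq_iff_eq]
    by_cases h : μ = ν
    · subst h; simp
    · rw [if_neg h, if_neg (fun h' => h (up_inj h'))]; simp
  | add f g hf hg => rw [map_add, cf_add, cf_add, hf, hg]; ring

lemma cf_Phi_supp {N : ℕ} (f : P (N + 1)) (μ : Fin (N + 1) → ℕ)
    (h : cf (Phi (Nat.succ_pos N) f) μ ≠ 0) : ∃ ν, up ν = μ ∧ cf f ν ≠ 0 := by
  rcases Nat.eq_zero_or_pos (μ (Fin.last N)) with h0 | h0
  · exact absurd (cf_X_zero μ h0 _) h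
  · obtain ⟨ν, rfl⟩ := exists_up μ h0
    refine ⟨ν, rfl, fun h1 => h ?_⟩
    rw [cf_Phi_up, h1, mul_zero]

lemma sum_up {N : ℕ} (ν : Fin (N + 1) → ℕ) : ∑ x, up ν x = ∑ x, ν x + 1 := by
  rw [Fin.sum_univ_castSucc, Fin.sum_univ_succ]
  simp only [up_last, up_castSucc]
  omega

lemma rk_up_low {N : ℕ} (p m : ℕ) (hp : p ≤ N) (ν : Fin (N + 1) → ℕ) :
    rk p m (up ν) = rk (p + 1) m ν := by
  unfold rk
  rw [Fin.sum_univ_castSucc, Fin.sum_univ_succ, add_comm]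
  simp only [up_last, up_castSucc, Fin.val_last, Fin.val_castSucc, Fin.val_succ]
  congr 1
  · rw [if_neg (by omega), if_pos (by simp)]
  · apply Finset.sum_congr rfl
    intro x _
    simp

lemma rk_up_high {N : ℕ} (p m : ℕ) (hp : N < p) (ν : Fin (N + 1) → ℕ) :
    rk p (m + 1) (up ν) = rk 1 m ν := by
  unfold rk
  rw [Fin.sum_univ_castSucc, Fin.sum_univ_succ, add_comm]
  simp only [up_last, up_castSucc, Fin.val_last, Fin.val_castSucc, Fin.val_succ]
  congr 1
  · rw [if_pos (by omega), if_pos (by simp)]; omega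
  · apply Finset.sum_congr rfl
    intro x _
    have := x.2
    rw [if_pos (by omega), if_neg (by omega)]; omega

lemma rk_zero {n : ℕ} (p : ℕ) (ν : Fin n → ℕ) :
    rk p 0 ν = ∑ x, ν x + ∑ x : Fin n, (if (x : ℕ) < p then 1 else 0) := by
  unfold rk
  rw [← Finset.sum_add_distrib]
  rfl

lemma Ble_up {N : ℕ} {ν η : Fin (N + 1) → ℕ} (h : Ble ν η) : Ble (up ν) (up η) := by
  refine ⟨by rw [sum_up, sum_up, h.1], fun p m => ?_⟩
  by_cases hp : p ≤ N
  · rw [rk_up_low p m hp, rk_up_low p m hp]; exact h.2 _ _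
  · rcases m with _ | m
    · rw [rk_zero, rk_zero, sum_up, sum_up, h.1]
    · rw [rk_up_high p m (by omega), rk_up_high p m (by omega)]; exact h.2 _ _

end Stmt10

namespace Stmt10

lemma legCo_eq {n : ℕ} (η : Fin n → ℕ) (i : Fin n) :
    legCo n η i = ∑ k, ((if k < i ∧ η i ≤ η k then 1 else 0) +
      (if i < k ∧ η i < η k then 1 else 0)) := by
  rw [legCo, Finset.card_filter, Finset.card_filter, Finset.sum_add_distrib]

lemma leg_eq {n : ℕ} (η : Fin n → ℕ) (i : Fin n) (j : ℕ) :
    leg n η i j = ∑ k, ((if i < k ∧ j ≤ η k ∧ η k ≤ η i then 1 else 0) +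
      (if k < i ∧ j ≤ η k + 1 ∧ η k + 1 ≤ η i then 1 else 0)) := by
  rw [leg, Finset.card_filter, Finset.card_filter, Finset.sum_add_distrib]

section up
variable {N : ℕ} (η : Fin (N + 1) → ℕ)

lemma legCo_up_castSucc (i : Fin N) : legCo (N + 1) (up η) i.castSucc = legCo (N + 1) η i.succ := by
  rw [legCo_eq, legCo_eq, Fin.sum_univ_castSucc, Fin.sum_univ_succ, add_comm]
  congr 1
  · simp [Fin.lt_def, Nat.lt_succ_iff, Nat.le_of_lt i.2]
  · simp only [up_castSucc, Fin.castSucc_lt_castSucc_iff, Fin.succ_lt_succ_iff]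

lemma legCo_up_last : legCo (N + 1) (up η) (Fin.last N) = legCo (N + 1) η 0 := by
  rw [legCo_eq, legCo_eq, Fin.sum_univ_castSucc, Fin.sum_univ_succ, add_comm]
  congr 1
  · simp
  · apply Finset.sum_congr rfl
    intro x _
    simp [Nat.succ_le_iff, Fin.lt_def, Nat.le_of_lt x.2]

lemma leg_up_castSucc (i : Fin N) (y : ℕ) :
    leg (N + 1) (up η) i.castSucc y = leg (N + 1) η i.succ y := by
  rw [leg_eq, leg_eq, Fin.sum_univ_castSucc, Fin.sum_univ_succ, add_comm]
  congr 1
  · simp [Fin.lt_def, Nat.le_of_lt i.2]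
  · simp only [up_castSucc, Fin.castSucc_lt_castSucc_iff, Fin.succ_lt_succ_iff]

lemma leg_up_last (y : ℕ) :
    leg (N + 1) (up η) (Fin.last N) (y + 1) = leg (N + 1) η 0 y := by
  rw [leg_eq, leg_eq, Fin.sum_univ_castSucc, Fin.sum_univ_succ, add_comm]
  congr 1
  · simp
  · apply Finset.sum_congr rfl
    intro x _
    simp [Fin.lt_def, Nat.le_of_lt x.2]

lemma leg_zero_zero : leg (N + 1) η 0 0 + legCo (N + 1) η 0 = N := by
  rw [leg_eq, legCo_eq, ← Finset.sum_add_distrib, Fin.sum_univ_succ]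
  have : ∀ x : Fin N, ((if (0 : Fin (N + 1)) < x.succ ∧ 0 ≤ η x.succ ∧ η x.succ ≤ η 0 then 1 else 0) +
      (if x.succ < (0 : Fin (N + 1)) ∧ 0 ≤ η x.succ + 1 ∧ η x.succ + 1 ≤ η 0 then 1 else 0)) +
      ((if x.succ < (0 : Fin (N + 1)) ∧ η 0 ≤ η x.succ then 1 else 0) +
      (if (0 : Fin (N + 1)) < x.succ ∧ η 0 < η x.succ then 1 else 0)) = 1 := by
    intro x
    simp only [Fin.succ_pos, Fin.not_lt_zero, zero_le, true_and, false_and, if_false]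
    by_cases h : η x.succ ≤ η 0
    · simp [h]
    · simp [h, not_le.mp h]
  rw [Finset.sum_congr rfl (fun x _ => this x)]
  simp

lemma prod_Icc_one (m : ℕ) (f : ℕ → K) :
    ∏ j ∈ Icc 1 (m + 1), f j = f 1 * ∏ j ∈ Icc 1 m, f (j + 1) := by
  induction m with
  | zero => simp
  | succ m ih => rw [Finset.prod_Icc_succ_top (by omega), ih, Finset.prod_Icc_succ_top (by omega), mul_assoc]

lemma sum_Icc_one (m : ℕ) (f : ℕ → ℕ) :
    ∑ j ∈ Icc 1 (m + 1), f j = f 1 + ∑ j ∈ Icc 1 m, f (j + 1) := by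
  induction m with
  | zero => simp
  | succ m ih => rw [Finset.sum_Icc_succ_top (by omega), ih, Finset.sum_Icc_succ_top (by omega), add_assoc]

lemma lTot_up : lTot (N + 1) (up η) = lTot (N + 1) η + leg (N + 1) η 0 0 := by
  unfold lTot
  rw [Fin.sum_univ_castSucc, Fin.sum_univ_succ]
  simp only [up_last, up_castSucc, leg_up_castSucc]
  rw [sum_Icc_one]
  rw [leg_up_last η 0]
  simp only [leg_up_last]
  omega

lemma dP_up : dP (N + 1) (up η) =
    dP (N + 1) η * (1 - q ^ (η 0 + 1) * t ^ (leg (N + 1) η 0 0 + 1)) := by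
  unfold dP
  rw [Fin.prod_univ_castSucc, Fin.prod_univ_succ]
  simp only [up_last, up_castSucc, leg_up_castSucc]
  rw [prod_Icc_one]
  rw [leg_up_last η 0]
  simp only [leg_up_last, Nat.add_sub_cancel, Nat.add_sub_add_right]
  ring

lemma eP_up : eP (N + 1) (up η) =
    eP (N + 1) η * (1 - q ^ (η 0 + 1) * t ^ (leg (N + 1) η 0 0 + 1)) := by
  have h : N + 1 - legCo (N + 1) η 0 = leg (N + 1) η 0 0 + 1 := by
    have := leg_zero_zero η
    omega
  unfold eP
  rw [Fin.prod_univ_castSucc, Fin.prod_univ_succ]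
  simp only [up_last, up_castSucc, legCo_up_castSucc, legCo_up_last, h]
  rw [Finset.prod_Icc_succ_top (by omega)]
  simp only [Nat.add_sub_cancel]
  ring

end up

section sw
variable {n k : ℕ} {i j : Fin n} (hi : (i : ℕ) = k) (hj : (j : ℕ) = k + 1)

lemma swap_order (hi : (i : ℕ) = k) (hj : (j : ℕ) = k + 1) (x y : Fin n) :
    (x = i ∧ y = j) ∨ (x = j ∧ y = i) ∨
    ((Equiv.swap i j x < Equiv.swap i j y ↔ x < y) ∧ (Equiv.swap i j y < Equiv.swap i j x ↔ y < x)) := by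
  have hs : ∀ z : Fin n, ((Equiv.swap i j z : Fin n) : ℕ) =
      if (z : ℕ) = k then k + 1 else if (z : ℕ) = k + 1 then k else z := by
    intro z
    rw [Equiv.swap_apply_def]
    simp only [Fin.ext_iff, hi, hj]
    split_ifs <;> simp_all
  simp only [Fin.ext_iff, Fin.lt_def, hs, hi, hj]
  split_ifs <;> omega

lemma legCo_swap (hi : (i : ℕ) = k) (hj : (j : ℕ) = k + 1) (η : Fin n → ℕ) (hlt : η i < η j) (x : Fin n) :
    legCo n (η ∘ Equiv.swap i j) (Equiv.swap i j x) = legCo n η x := by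
  have hij : i < j := by rw [Fin.lt_def]; omega
  rw [legCo_eq, legCo_eq, ← Equiv.sum_comp (Equiv.swap i j)]
  apply Finset.sum_congr rfl
  intro y _
  simp only [Function.comp, Equiv.swap_apply_self]
  rcases swap_order hi hj x y with ⟨rfl, rfl⟩ | ⟨rfl, rfl⟩ | ⟨h1, h2⟩
  · simp [hij, hij.not_gt, hlt, hlt.le]
  · simp [hij, hij.not_gt, hlt.not_gt, hlt.not_ge]
  · simp only [h1, h2]

lemma leg_swap (hi : (i : ℕ) = k) (hj : (j : ℕ) = k + 1) (η : Fin n → ℕ) (hlt : η i < η j)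
    (x : Fin n) (y : ℕ) :
    leg n η x y = leg n (η ∘ Equiv.swap i j) (Equiv.swap i j x) y +
      (if x = j ∧ y = η i + 1 then 1 else 0) := by
  have hij : i < j := by rw [Fin.lt_def]; omega
  have e : (if x = j ∧ y = η i + 1 then 1 else 0) = ∑ z, if z = i then (if x = j ∧ y = η i + 1 then 1 else 0) else 0 := by
    simp
  rw [e, leg_eq, leg_eq]
  refine Eq.trans ?_ (congrArg (fun w => w + _) (Equiv.sum_comp (Equiv.swap i j) _))
  rw [← Finset.sum_add_distrib]
  apply Finset.sum_congr rfl
  intro z _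
  simp only [Function.comp, Equiv.swap_apply_self]
  rcases swap_order hi hj x z with ⟨rfl, rfl⟩ | ⟨rfl, rfl⟩ | ⟨h1, h2⟩
  · have a1 : ¬ η z ≤ η x := by omega
    have a2 : ¬ η z + 1 ≤ η x := by omega
    simp [hij.ne, a1, a2]
  · simp only [Equiv.swap_apply_left, Equiv.swap_apply_right, hij, hij.not_gt, true_and, false_and,
      if_false, if_true]
    split_ifs <;> omega
  · simp only [h1, h2]
    by_cases hz : z = i ∧ x = j
    · obtain ⟨rfl, rfl⟩ := hz
      simp [hij, hij.not_gt] at h1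
    · by_cases hz1 : z = i
      · have : x ≠ j := fun h => hz ⟨hz1, h⟩
        simp [this]
      · simp [hz1]

lemma leg_diff (hi : (i : ℕ) = k) (hj : (j : ℕ) = k + 1) (η : Fin n → ℕ) (hlt : η i < η j) :
    legCo n η i = legCo n η j + leg n η j (η i + 1) := by
  have hij : i < j := by rw [Fin.lt_def]; omega
  have : legCo n η i + ∑ z, (if z = i then 1 else 0) =
      legCo n η j + leg n η j (η i + 1) + ∑ z, (if z = j then 1 else 0) := by
    rw [legCo_eq, legCo_eq, leg_eq, ← Finset.sum_add_distrib, ← Finset.sum_add_distrib,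
      ← Finset.sum_add_distrib]
    apply Finset.sum_congr rfl
    intro z _
    simp only [Fin.ext_iff, Fin.lt_def, hi, hj]
    by_cases h1 : z = i
    · subst h1
      simp [hi, hlt, hlt.not_ge, Nat.succ_le_of_lt hlt]
    by_cases h2 : z = j
    · subst h2
      simp [hj, hlt]
    have h1' : (z : ℕ) ≠ k := fun h => h1 (Fin.ext (h.trans hi.symm))
    have h2' : (z : ℕ) ≠ k + 1 := fun h => h2 (Fin.ext (h.trans hj.symm))
    rw [if_neg h1', if_neg h2']
    by_cases h3 : (z : ℕ) < k
    · have : (z : ℕ) < k + 1 := by omega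
      simp only [h3, this, h3.not_gt, this.not_gt, true_and, false_and, if_false]
      split_ifs <;> omega
    · have a : k < (z : ℕ) := by omega
      have b : k + 1 < (z : ℕ) := by omega
      simp only [a, b, a.not_gt, b.not_gt, true_and, false_and, if_false]
      split_ifs <;> omega
  simpa using this

lemma eP_swap (hi : (i : ℕ) = k) (hj : (j : ℕ) = k + 1) (η : Fin n → ℕ) (hlt : η i < η j) :
    eP n (η ∘ Equiv.swap i j) = eP n η := by
  unfold eP
  rw [← Equiv.prod_comp (Equiv.swap i j)]
  simp only [legCo_swap hi hj η hlt]
  simp only [Function.comp, Equiv.swap_apply_self]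

lemma lTot_swap (hi : (i : ℕ) = k) (hj : (j : ℕ) = k + 1) (η : Fin n → ℕ) (hlt : η i < η j) :
    lTot n η = lTot n (η ∘ Equiv.swap i j) + 1 := by
  unfold lTot
  rw [← Equiv.sum_comp (Equiv.swap i j) (fun x => ∑ y ∈ Icc 1 ((η ∘ Equiv.swap i j) x), _)]
  simp only [leg_swap hi hj η hlt, Finset.sum_add_distrib]
  simp only [Function.comp, Equiv.swap_apply_self]
  congr 1
  rw [Finset.sum_eq_single j, Finset.sum_eq_single (η i + 1)]
  · simp
  · intro y _ hy; simp [hy]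
  · intro h; simp at h; omega
  · intro x _ hx; simp [hx]
  · simp

lemma dP_swap (hi : (i : ℕ) = k) (hj : (j : ℕ) = k + 1) (η : Fin n → ℕ) (hlt : η i < η j)
    (r : ℕ) (hr : leg n η j (η i + 1) = r) :
    dP n η * (1 - q ^ (η j - η i) * t ^ r) =
      dP n (η ∘ Equiv.swap i j) * (1 - q ^ (η j - η i) * t ^ (r + 1)) := by
  have hL := leg_swap hi hj η hlt
  unfold dP
  rw [← Equiv.prod_comp (Equiv.swap i j) (fun x => ∏ y ∈ Icc 1 ((η ∘ Equiv.swap i j) x), _)]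
  simp only [Function.comp, Equiv.swap_apply_self]
  rw [← Finset.mul_prod_erase univ _ (mem_univ j), ← Finset.mul_prod_erase univ _ (mem_univ j)]
  have hmem : η i + 1 ∈ Icc 1 (η j) := by simp; omega
  rw [← Finset.mul_prod_erase (Icc 1 (η j)) _ hmem, ← Finset.mul_prod_erase (Icc 1 (η j)) _ hmem]
  have e1 : ∏ x ∈ univ.erase j, ∏ y ∈ Icc 1 (η x), (1 - q ^ (η x - y + 1) * t ^ (leg n η x y + 1)) =
    ∏ x ∈ univ.erase j, ∏ y ∈ Icc 1 (η x), (1 - q ^ (η x - y + 1) *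
      t ^ (leg n (η ∘ Equiv.swap i j) (Equiv.swap i j x) y + 1)) := by
    apply Finset.prod_congr rfl
    intro x hx
    apply Finset.prod_congr rfl
    intro y _
    rw [hL x y, if_neg (by simp at hx; tauto), add_zero]
  have e2 : ∏ y ∈ (Icc 1 (η j)).erase (η i + 1), (1 - q ^ (η j - y + 1) * t ^ (leg n η j y + 1)) =
    ∏ y ∈ (Icc 1 (η j)).erase (η i + 1), (1 - q ^ (η j - y + 1) *
      t ^ (leg n (η ∘ Equiv.swap i j) (Equiv.swap i j j) y + 1)) := by
    apply Finset.prod_congr rfl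
    intro y hy
    rw [hL j y, if_neg (by simp at hy; tauto), add_zero]
  have e3 := hL j (η i + 1)
  rw [if_pos ⟨rfl, rfl⟩] at e3
  rw [hr] at e3
  rw [e1, e2, ← e3, hr, show η j - (η i + 1) + 1 = η j - η i by omega]
  ring

end sw
end Stmt10

namespace Stmt10

/-- F is a joint eigenfunction with the correct leading term, and the evaluation formula holds -/
def Good {n : ℕ} (T : ℕ → Module.End K (P n)) (η : Fin n → ℕ) (F : P n) : Prop :=
  cf F η = 1 ∧ (∀ ν, cf F ν ≠ 0 → Ble ν η) ∧
  (∀ i : Fin n, Yv T i F = (q ^ η i / t ^ legCo n η i) • F) ∧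
  eval (fun i : Fin n => t ^ (i : ℕ)) F * dP n η = t ^ lTot n η * eP n η

lemma Ti_one {n : ℕ} {T : ℕ → Module.End K (P n)} (hT : IsDL n t T) {k : ℕ} (hk : k + 1 < n) :
    Ti T k 1 = t⁻¹ • (1 : P n) := by
  rw [Ti_eq, LinearMap.smul_apply, LinearMap.add_apply, LinearMap.smul_apply, Module.End.one_apply,
    T_one hT hk, ← add_smul]
  simp

lemma Rp_one {n : ℕ} {T : ℕ → Module.End K (P n)} (hT : IsDL n t T) (j : ℕ) (hj : j < n) :
    Rp T j 1 = (t ^ j)⁻¹ • (1 : P n) := by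
  induction j with
  | zero => simp [Rp_zero]
  | succ j ih =>
    rw [Rp_succ, Module.End.mul_apply, Ti_one hT hj, map_smul, ih (by omega), smul_smul, pow_succ',
      mul_inv]

lemma Lp_one {n : ℕ} {T : ℕ → Module.End K (P n)} (hT : IsDL n t T) (m a : ℕ) (h : a + m < n) :
    Lp T a m 1 = t ^ m • (1 : P n) := by
  induction m generalizing a with
  | zero => simp [Lp_zero]
  | succ m ih =>
    rw [Lp_succ, Module.End.mul_apply, ih _ (by omega), map_smul, T_one hT (by omega), smul_smul,
      pow_succ]

lemma eval_Lp {n : ℕ} {T : ℕ → Module.End K (P n)} (hT : IsDL n t T) (m a : ℕ) (h : a + m < n) (f : P n) :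
    eval (fun i : Fin n => t ^ (i : ℕ)) (Lp T a m f) = t ^ m * eval (fun i : Fin n => t ^ (i : ℕ)) f := by
  induction m generalizing a with
  | zero => simp [Lp_zero]
  | succ m ih =>
    rw [Lp_succ, Module.End.mul_apply, eval_pt_T hT (by omega), ih _ (by omega), pow_succ]
    ring

lemma Good_zero {n : ℕ} {T : ℕ → Module.End K (P n)} (hT : IsDL n t T) :
    Good T (fun _ : Fin n => 0) 1 := by
  have e : ∀ ν : Fin n → ℕ, cf (1 : P n) ν = if ν = (fun _ => 0) then 1 else 0 := by
    intro ν
    unfold cf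
    rw [MvPolynomial.coeff_one]
    congr 1
    rw [eq_comm, eq_iff_iff, ← Finsupp.equivFunOnFinite.injective.eq_iff]
    simp only [Equiv.apply_symm_apply]
    rw [eq_comm]
    rfl
  refine ⟨by rw [e, if_pos rfl], ?_, ?_, ?_⟩
  · intro ν h
    rw [e] at h
    have : ν = (fun _ => 0) := by by_contra h'; simp [h'] at h
    rw [this]
    exact Ble_refl _
  · intro i
    have hl : legCo n (fun _ : Fin n => 0) i = i := by
      unfold legCo
      simp only [le_refl, and_true, lt_irrefl, and_false, Finset.filter_false, Finset.card_empty, add_zero]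
      have := Fin.card_Iio i
      rw [← this]
      congr 1
      ext x; simp
    have hi := i.2
    have h0 : 0 < n := by omega
    have hW : Wo n (1 : P n) = 1 := omega_one h0
    rw [hl, Yv, LinearMap.smul_apply, Module.End.mul_apply, Module.End.mul_apply, Rp_one hT _ hi,
      map_smul, map_smul, hW, Lp_one hT _ _ (by omega), smul_smul, smul_smul]
    congr 1
    have := pow_ne_zero (n - 1 - (i : ℕ)) t_ne
    rw [pow_zero, mul_right_comm, inv_mul_cancel₀ this]
    simp
  · simp [dP, eP, lTot]

lemma Good_up {N : ℕ} {T : ℕ → Module.End K (P (N + 1))} (hT : IsDL (N + 1) t T)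
    {η : Fin (N + 1) → ℕ} {F : P (N + 1)} (hF : Good T η F) :
    Good T (up η) ((q ^ η 0)⁻¹ • Phi (Nat.succ_pos N) F) := by
  obtain ⟨h1, h2, h3, h4⟩ := hF
  have hq : q ^ η 0 ≠ 0 := pow_ne_zero _ q_ne
  refine ⟨?_, ?_, ?_, ?_⟩
  · rw [cf_smul, cf_Phi_up, h1, mul_one, inv_mul_cancel₀ hq]
  · intro ν h
    rw [cf_smul] at h
    obtain ⟨μ, rfl, h'⟩ := cf_Phi_supp F ν (right_ne_zero_of_mul h)
    exact Ble_up (h2 _ h')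
  · intro i
    rw [map_smul, smul_comm]
    congr 1
    refine Fin.lastCases ?_ (fun j => ?_) i
    · have e := congrArg (fun A : Module.End K (P (N + 1)) => A F) (Y_last_Phi hT (Nat.succ_pos N))
      have e0 := h3 0
      simp only [Module.End.mul_apply, LinearMap.smul_apply, Nat.add_sub_cancel] at e
      rw [Fin.val_zero] at e0
      rw [Fin.val_last, e, e0, map_smul, smul_smul, up_last, legCo_up_last]
      congr 1
      ring
    · have hj := j.2
      have e := congrArg (fun A : Module.End K (P (N + 1)) => A F)
        (Y_Phi hT (Nat.succ_pos N) (N - 1 - j) j (by omega))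
      have e0 := h3 j.succ
      simp only [Module.End.mul_apply] at e
      rw [Fin.val_succ] at e0
      rw [Fin.val_castSucc, e, e0, map_smul, up_castSucc, legCo_up_castSucc]
  · have e0 := congrArg (eval (fun i : Fin (N + 1) => t ^ (i : ℕ))) (h3 0)
    rw [Fin.val_zero, Yv, Rp_zero, mul_one, LinearMap.smul_apply, Module.End.mul_apply, smul_eval, smul_eval,
      eval_Lp hT _ _ (by omega)] at e0
    have e1 : eval (fun i : Fin (N + 1) => t ^ (i : ℕ)) (Phi (Nat.succ_pos N) F) =
        t ^ N * eval (fun i : Fin (N + 1) => t ^ (i : ℕ)) (Wo (N + 1) F) := by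
      have : Phi (Nat.succ_pos N) F = X (Fin.last N) * Wo (N + 1) F := rfl
      rw [this, map_mul, eval_X, Fin.val_last]
    have hN : t ^ (N + 1 - 1 - 0) ≠ 0 := pow_ne_zero _ t_ne
    rw [inv_mul_cancel_left₀ hN] at e0
    have e2 := leg_zero_zero η
    rw [smul_eval, e1, e0, dP_up, eP_up, lTot_up]
    generalize leg (N + 1) η 0 0 = L at *
    have hL : t ^ legCo (N + 1) η 0 ≠ 0 := pow_ne_zero _ t_ne
    have hN' : t ^ N = t ^ L * t ^ legCo (N + 1) η 0 := by rw [← pow_add, e2]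
    rw [hN', pow_add]
    generalize eval (fun i : Fin (N + 1) => t ^ (i : ℕ)) F = f at *
    field_simp
    linear_combination t ^ L * (1 - q ^ (η 0 + 1) * t ^ (L + 1)) * h4

section gen
variable {R M : Type*} [Field R] [AddCommGroup M] [Module R M]

lemma gen_a (t a b : R) (ht : t ≠ 0) (G F : M) :
    t⁻¹ • ((t - 1) • (a • ((t - 1) • G + t • F) + ((1 - t) * a) • G) + t • b • G) =
      b • G - ((1 - t) * a) • F := by
  match_scalars
  · field_simp; ring
  · field_simp; ring

lemma gen_b (t a b c : R) (h : c * (a - b) = (1 - t) * a) (G F : M) :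
    a • G + ((1 - t) * a) • F + c • b • F = a • (G + c • F) := by
  match_scalars
  · ring
  · linear_combination -h

lemma gen_c (t a b c : R) (h : c * (a - b) = (1 - t) * a) (G F : M) :
    b • G - ((1 - t) * a) • F + c • a • F = b • (G + c • F) := by
  match_scalars
  · ring
  · linear_combination h

lemma gen_d (y c : R) (G F : M) : y • G + c • y • F = y • (G + c • F) := by
  match_scalars <;> ring

end gen

lemma Good_swap {n k : ℕ} {T : ℕ → Module.End K (P n)} (hT : IsDL n t T)
    {i j : Fin n} (hi : (i : ℕ) = k) (hj : (j : ℕ) = k + 1)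
    {η : Fin n → ℕ} (hlt : η i < η j) {F : P n} (hF : Good T η F) :
    ∃ F', Good T (η ∘ Equiv.swap i j) F' := by
  obtain ⟨h1, h2, h3, h4⟩ := hF
  have hk : k + 1 < n := hj ▸ j.2
  have hij : i ≠ j := by rw [Ne, Fin.ext_iff]; omega
  set r := leg n η j (η i + 1) with hr
  have hd := leg_diff hi hj η hlt
  rw [← hr] at hd
  set a : K := q ^ η i / t ^ legCo n η i with ha
  set b : K := q ^ η j / t ^ legCo n η j with hb
  have ya := h3 i
  have yb := h3 j
  rw [← ha, hi] at ya
  rw [← hb, hj] at yb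
  have ha0 : a ≠ 0 := div_ne_zero (pow_ne_zero _ q_ne) (pow_ne_zero _ t_ne)
  have hz1 : 1 - q ^ (η j - η i) * t ^ r ≠ 0 := by
    intro h
    have := (qt_inj (a := η j - η i) (b := r) (c := 0) (d := 0) (by
      rw [pow_zero, pow_zero, one_mul]; linear_combination -h)).1
    omega
  have hba : b = a * (q ^ (η j - η i) * t ^ r) := by
    have e1 : q ^ η j = q ^ η i * q ^ (η j - η i) := by rw [← pow_add]; congr 1; omega
    rw [ha, hb, hd, e1, pow_add]
    have := pow_ne_zero (legCo n η j) t_ne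
    have := pow_ne_zero r t_ne
    field_simp
  generalize hz : q ^ (η j - η i) * t ^ r = z at *
  have hab : a - b ≠ 0 := by
    rw [hba]; intro h; apply hz1
    have : a * (1 - z) = 0 := by linear_combination h
    exact (mul_eq_zero.mp this).resolve_left ha0
  have hTT : T k (T k F) = (t - 1) • T k F + t • F := by
    have := congrArg (fun A : Module.End K (P n) => A F) (T_sq hT hk)
    simpa using this
  -- action of Y on T F
  have yTb : Yv T (k + 1) (T k F) = a • T k F + ((1 - t) * a) • F := by
    have e := congrArg (fun A : Module.End K (P n) => Ti T k (A F)) (Y_rec hT hk)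
    have e2 := congrArg (fun A : Module.End K (P n) => A (Yv T (k + 1) (T k F))) (Ti_mul_T hT hk)
    simp only [LinearMap.smul_apply, Module.End.mul_apply, map_smul, Module.End.one_apply] at e e2
    rw [e2, ya, Ti_eq] at e
    have e3 := congrArg (fun v => t • v) e
    simp only [smul_smul, mul_inv_cancel₀ t_ne, one_smul] at e3
    rw [← e3]
    simp only [map_smul, LinearMap.smul_apply, LinearMap.add_apply, Module.End.one_apply, smul_add, smul_smul]
    congr 2
    · field_simp [t_ne]
    · field_simp [t_ne]
  have yTa : Yv T k (T k F) = b • T k F - ((1 - t) * a) • F := by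
    have e := congrArg (fun A : Module.End K (P n) => A (T k F)) (Y_rec hT hk)
    simp only [LinearMap.smul_apply, Module.End.mul_apply] at e
    rw [e, hTT]
    simp only [map_add, map_smul, yTb, yb, hTT]
    exact gen_a t a b t_ne _ _
  set c : K := (1 - t) * a / (a - b) with hc
  have hcab : c * (a - b) = (1 - t) * a := div_mul_cancel₀ _ hab
  refine ⟨t⁻¹ • (T k F + c • F), ?_, ?_, ?_, ?_⟩
  · have e1 : η ∘ Equiv.swap i j = upd i j η (η j) (η i) := by
      funext x
      unfold upd
      rw [Function.comp_apply, Equiv.swap_apply_def]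
      split_ifs <;> rfl
    have z0 : cf F (η ∘ Equiv.swap i j) = 0 := by
      by_contra h
      refine not_Ble_swap i j hi hj hlt ?_ ?_ ?_ (h2 _ h)
      · simp
      · simp
      · intro x hx1 hx2
        rw [Function.comp_apply, Equiv.swap_apply_of_ne_of_ne hx1 hx2]
    have z1 := (cf_T_string hT i j hi hj η F (η j + η i) (η j) (by
      intro a b _ hm
      by_contra h
      exact not_Ble_long i j hij hlt a b hm (h2 _ h))).1 (η i) (η j) rfl le_rfl
    rw [upd_self, h1, ← e1] at z1
    rw [cf_smul, cf_add, cf_smul, z0, z1, mul_zero, add_zero, mul_one, inv_mul_cancel₀ t_ne]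
  · intro ν hν
    have g1 : (η ∘ Equiv.swap i j) i = η j := by simp
    have g2 : (η ∘ Equiv.swap i j) j = η i := by simp
    have g3 : ∀ x, x ≠ i → x ≠ j → (η ∘ Equiv.swap i j) x = η x := by
      intro x hx1 hx2
      rw [Function.comp_apply, Equiv.swap_apply_of_ne_of_ne hx1 hx2]
    rw [cf_smul, cf_add, cf_smul] at hν
    by_cases hf : cf F ν = 0
    · rw [hf, mul_zero, add_zero] at hν
      obtain ⟨a', b', s1, s2, s3⟩ := cf_T_supp hT i j hi hj ν F (right_ne_zero_of_mul hν)
      have u1 : upd i j ν a' b' i = a' := by simp [upd]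
      have u2 : upd i j ν a' b' j = b' := by simp [upd, hij.symm]
      refine Ble_T i j hi hj (h2 _ s3) hlt g1 g2 g3 ?_ ?_ ?_
      · intro x hx1 hx2
        simp [upd, hx1, hx2]
      · rw [u1, u2]; exact s1.symm
      · rw [u1, u2]; exact s2
    · exact Ble_T i j hi hj (h2 _ hf) hlt g1 g2 g3 (fun _ _ _ => rfl) rfl le_rfl
  · have key : ∀ x, Yv T ((Equiv.swap i j x : Fin n) : ℕ) (t⁻¹ • (T k F + c • F)) =
        (q ^ η x / t ^ legCo n η x) • (t⁻¹ • (T k F + c • F)) := by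
      intro x
      rw [map_smul, smul_comm]
      congr 1
      rw [map_add, map_smul]
      by_cases hx1 : x = i
      · rw [hx1, Equiv.swap_apply_left, hj, yTb, yb, ← ha]
        exact gen_b t a b c hcab _ _
      by_cases hx2 : x = j
      · rw [hx2, Equiv.swap_apply_right, hi, yTa, ya, ← hb]
        exact gen_c t a b c hcab _ _
      · rw [Equiv.swap_apply_of_ne_of_ne hx1 hx2]
        have e := congrArg (fun A : Module.End K (P n) => A F) (Y_comm hT hk x.2
          (fun h => hx1 (Fin.ext (h.trans hi.symm))) (fun h => hx2 (Fin.ext (h.trans hj.symm)))).eq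
        simp only [Module.End.mul_apply] at e
        rw [← e, h3 x, map_smul]
        exact gen_d _ _ _ _
    intro x
    have := key (Equiv.swap i j x)
    rw [Equiv.swap_apply_self] at this
    rw [this, Function.comp_apply]
    have := legCo_swap hi hj η hlt (Equiv.swap i j x)
    rw [Equiv.swap_apply_self] at this
    rw [this]
  · have hdP := dP_swap hi hj η hlt r hr.symm
    rw [pow_succ, ← mul_assoc, hz] at hdP
    rw [smul_eval, map_add, smul_eval, eval_pt_T hT hk, eP_swap hi hj η hlt]
    rw [lTot_swap hi hj η hlt, pow_succ] at h4
    have hcz : c * (1 - z) = 1 - t := by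
      apply mul_left_cancel₀ ha0
      rw [hba] at hcab
      linear_combination hcab
    generalize eval (fun i : Fin n => t ^ (i : ℕ)) F = f at *
    generalize dP n (η ∘ Equiv.swap i j) = D' at *
    generalize dP n η = D at *
    apply mul_left_cancel₀ (mul_ne_zero t_ne hz1)
    have : t * (1 - z) * (t⁻¹ * (t * f + c * f) * D') = (t * t⁻¹) * (1 - z) * ((t * f + c * f) * D') := by ring
    rw [this, mul_inv_cancel₀ t_ne]
    linear_combination f * D' * hcz - f * hdP + (1 - z) * h4

lemma exists_drop {n : ℕ} (η : Fin n → ℕ) (h : ∀ i j : Fin n, (j : ℕ) = i + 1 → η j = 0 → η i = 0)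
    (hl : ∀ i : Fin n, (i : ℕ) + 1 = n → η i = 0) : η = fun _ => 0 := by
  have : ∀ m, ∀ i : Fin n, (i : ℕ) + 1 + m = n → η i = 0 := by
    intro m
    induction m with
    | zero => exact hl
    | succ m ih => exact fun i hi => h i ⟨i + 1, by omega⟩ rfl (ih _ (by simp; omega))
  funext i
  exact this (n - 1 - i) i (by have := i.2; omega)

lemma exists_Good {n : ℕ} {T : ℕ → Module.End K (P n)} (hT : IsDL n t T) (d : ℕ) :
    ∀ M : ℕ, ∀ η : Fin n → ℕ, ∑ x, η x = d → ∑ x : Fin n, (n - (x : ℕ)) * η x = M → ∃ F, Good T η F := by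
  induction d with
  | zero =>
    intro M η h _
    have : η = fun _ => 0 := by
      funext x
      have := Finset.sum_eq_zero_iff.mp h x (mem_univ x)
      exact this
    rw [this]
    exact ⟨1, Good_zero hT⟩
  | succ d ihd =>
    intro M
    induction M using Nat.strong_induction_on with
    | _ M ih =>
    intro η hs hM
    by_cases hdrop : ∃ i j : Fin n, (j : ℕ) = i + 1 ∧ η j = 0 ∧ η i ≠ 0
    · obtain ⟨i, j, hj, hj0, hi0⟩ := hdrop
      have hij : i ≠ j := by rw [Ne, Fin.ext_iff]; omega
      have hlt : (η ∘ Equiv.swap i j) i < (η ∘ Equiv.swap i j) j := by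
        simp [hj0]; omega
      have e : η = (η ∘ Equiv.swap i j) ∘ Equiv.swap i j := by
        funext x; simp
      have hs' : ∑ x, (η ∘ Equiv.swap i j) x = d + 1 := by
        rw [← hs]; exact Equiv.sum_comp (Equiv.swap i j) η
      have hr : ∑ x ∈ (univ.erase i).erase j, (n - (x : ℕ)) * (η ∘ Equiv.swap i j) x =
          ∑ x ∈ (univ.erase i).erase j, (n - (x : ℕ)) * η x := by
        apply Finset.sum_congr rfl
        intro x hx
        simp only [mem_erase, mem_univ, and_true] at hx
        rw [Function.comp_apply, Equiv.swap_apply_of_ne_of_ne hx.2 hx.1]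
      have hM' : ∑ x : Fin n, (n - (x : ℕ)) * (η ∘ Equiv.swap i j) x < M := by
        rw [← hM, sum_two hij, sum_two hij (fun x => (n - (x : ℕ)) * η x), hr]
        simp only [Function.comp_apply, Equiv.swap_apply_left, Equiv.swap_apply_right, hj0, mul_zero, zero_add, add_zero]
        have : n - (i : ℕ) = (n - (j : ℕ)) + 1 := by have := j.2; omega
        rw [this, Nat.add_mul]
        omega
      obtain ⟨F, hF⟩ := ih _ hM' _ hs' rfl
      rw [e]
      exact Good_swap hT rfl hj hlt hF
    · push Not at hdrop
      by_cases hl : ∃ i : Fin n, (i : ℕ) + 1 = n ∧ η i ≠ 0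
      · obtain ⟨i, hi, hi0⟩ := hl
        obtain ⟨N, rfl⟩ : ∃ N, n = N + 1 := ⟨i, hi.symm⟩
        have : i = Fin.last N := by apply Fin.ext; simp; omega
        subst this
        obtain ⟨μ, rfl⟩ := exists_up η (Nat.pos_of_ne_zero hi0)
        rw [sum_up] at hs
        obtain ⟨F, hF⟩ := ihd _ μ (by omega) rfl
        exact ⟨_, Good_up hT hF⟩
      · push Not at hl
        rw [exists_drop η hdrop hl]
        exact ⟨1, Good_zero hT⟩

end Stmt10

namespace Stmt10

lemma eig_inj {a b c d : ℕ} (h : q ^ a / t ^ b = q ^ c / t ^ d) : a = c := by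
  rw [div_eq_div_iff (pow_ne_zero _ t_ne) (pow_ne_zero _ t_ne)] at h
  exact (qt_inj h).1

section
variable {n : ℕ} {T : ℕ → Module.End K (P n)} {F : (Fin n → ℕ) → P n} (hF : ∀ η, Good T η (F η))

lemma eig_sum (hF : ∀ η, Good T η (F η)) (s : Finset (Fin n → ℕ)) (c : (Fin n → ℕ) → K) (μ : Fin n → ℕ)
    (i : Fin n) :
    Yv T i (∑ ν ∈ s, c ν • F ν) - (q ^ μ i / t ^ legCo n μ i) • ∑ ν ∈ s, c ν • F ν =
      ∑ ν ∈ s, (c ν * (q ^ ν i / t ^ legCo n ν i - q ^ μ i / t ^ legCo n μ i)) • F ν := by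
  rw [map_sum, Finset.smul_sum, ← Finset.sum_sub_distrib]
  apply Finset.sum_congr rfl
  intro ν _
  rw [map_smul, (hF ν).2.2.1 i, smul_smul, smul_smul, ← sub_smul]
  congr 1
  ring

lemma lin_indep (hF : ∀ η, Good T η (F η)) (s : Finset (Fin n → ℕ)) :
    ∀ c : (Fin n → ℕ) → K, ∑ ν ∈ s, c ν • F ν = 0 → ∀ ν ∈ s, c ν = 0 := by
  classical
  induction s using Finset.induction_on with
  | empty => intro c _ ν h; simp at h
  | insert μ s hμ ih =>
    intro c hc
    have hs : ∀ ν ∈ s, c ν = 0 := by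
      intro ν hν
      have hne : ν ≠ μ := fun h => hμ (h ▸ hν)
      obtain ⟨i, hi⟩ := Function.ne_iff.mp hne
      have e := eig_sum hF (insert μ s) c μ i
      rw [hc, map_zero, smul_zero, sub_zero, Finset.sum_insert hμ, sub_self, mul_zero, zero_smul,
        zero_add] at e
      have := ih _ e.symm ν hν
      exact (mul_eq_zero.mp this).resolve_right (fun h => hi (eig_inj (sub_eq_zero.mp h)))
    intro ν hν
    rcases Finset.mem_insert.mp hν with rfl | h
    · rw [Finset.sum_insert hμ, Finset.sum_eq_zero (fun x hx => by rw [hs x hx, zero_smul]), add_zero] at hc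
      have := congrArg (fun f => cf f ν) hc
      simp only [cf_smul, (hF ν).1] at this
      simpa [cf] using this
    · exact hs ν h

lemma mem_W (d : ℕ) (f : P n) (h : ∀ ν, cf f ν ≠ 0 → ∑ x, ν x = d) :
    f ∈ Submodule.span K (Set.range fun ν : (Finset.piAntidiag (univ : Finset (Fin n)) d) =>
      (monomial (Finsupp.equivFunOnFinite.symm ν.1) (1 : K) : P n)) := by
  rw [← support_sum_monomial_coeff f]
  apply Submodule.sum_mem
  intro m hm
  have hm' : cf f m ≠ 0 := by
    simpa [cf] using hm
  have : (monomial m (coeff m f) : P n) = coeff m f • monomial m 1 := by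
    rw [smul_monomial, smul_eq_mul, mul_one]
  rw [this]
  apply Submodule.smul_mem
  apply Submodule.subset_span
  exact ⟨⟨m, by simpa using h _ hm'⟩, by simp⟩

lemma mem_span_F (hF : ∀ η, Good T η (F η)) (d : ℕ) (f : P n) (h : ∀ ν, cf f ν ≠ 0 → ∑ x, ν x = d) :
    f ∈ Submodule.span K (Set.range fun ν : (Finset.piAntidiag (univ : Finset (Fin n)) d) => F ν.1) := by
  have hW := mem_W d f h
  have hli : LinearIndependent K
      (fun ν : (Finset.piAntidiag (univ : Finset (Fin n)) d) => F ν.1) := by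
    classical
    rw [Fintype.linearIndependent_iff]
    intro g hg ν
    have := lin_indep hF (Finset.piAntidiag (univ : Finset (Fin n)) d)
      (fun ν => if h : ν ∈ Finset.piAntidiag (univ : Finset (Fin n)) d then g ⟨ν, h⟩ else 0) (by
        rw [← Finset.sum_coe_sort, ← hg]
        apply Finset.sum_congr rfl
        intro x _
        simp only [x.2, dif_pos]) ν.1 ν.2
    simpa only [ν.2, dif_pos] using this
  have hle : Submodule.span K (Set.range fun ν : (Finset.piAntidiag (univ : Finset (Fin n)) d) => F ν.1) ≤
    Submodule.span K (Set.range fun ν : (Finset.piAntidiag (univ : Finset (Fin n)) d) =>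
      (monomial (Finsupp.equivFunOnFinite.symm ν.1) (1 : K) : P n)) := by
    rw [Submodule.span_le]
    rintro _ ⟨ν, rfl⟩
    apply mem_W
    intro μ hμ
    rw [((hF ν.1).2.1 μ hμ).1]
    have := ν.2
    rw [Finset.mem_piAntidiag] at this
    exact this.1
  have hfd : FiniteDimensional K (Submodule.span K
      (Set.range fun ν : (Finset.piAntidiag (univ : Finset (Fin n)) d) =>
      (monomial (Finsupp.equivFunOnFinite.symm ν.1) (1 : K) : P n))) :=
    FiniteDimensional.span_of_finite K (Set.finite_range _)
  have := Submodule.eq_of_le_of_finrank_le hle (by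
    rw [finrank_span_eq_card hli]
    exact finrank_range_le_card _)
  rw [this]
  exact hW

end

lemma sum_sortDesc {n : ℕ} (η : Fin n → ℕ) : ∑ x, sortDesc n η x = ∑ x, η x := by
  unfold sortDesc
  refine (Equiv.sum_comp Fin.revPerm (fun i => η (Tuple.sort η i))).trans ?_
  exact Equiv.sum_comp _ _

lemma prec_sum {n : ℕ} {ν η : Fin n → ℕ} (h : prec n ν η) : ∑ x, ν x = ∑ x, η x := by
  rcases h with h | h
  · have := h.1.1
    rwa [sum_sortDesc, sum_sortDesc] at this
  · exact h.2.1.1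

theorem main_eval (n : ℕ) (η : Fin n → ℕ)
    (T : ℕ → P n →ₗ[K] P n) (hT : IsDL n t T)
    (E : P n) (hE : IsNSMac n q t T η E) :
    eval (fun i : Fin n => t ^ (i : ℕ)) E * dP n η = t ^ lTot n η * eP n η := by
  classical
  obtain ⟨h1, h2, h3⟩ := hE
  have hex : ∀ ν : Fin n → ℕ, ∃ F, Good T ν F := fun ν => exists_Good hT _ _ ν rfl rfl
  choose F hF using hex
  have hm := mem_span_F hF (∑ x, η x) E (by
    intro ν hν
    rcases h2 _ hν with h | h
    · rw [← h]; simp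
    · simpa using prec_sum h)
  have hηA : η ∈ Finset.piAntidiag (univ : Finset (Fin n)) (∑ x, η x) := by simp
  generalize Finset.piAntidiag (univ : Finset (Fin n)) (∑ x, η x) = A at hm hηA
  rw [Submodule.mem_span_range_iff_exists_fun] at hm
  obtain ⟨g, hg⟩ := hm
  set c : (Fin n → ℕ) → K := fun ν => if h : ν ∈ A then g ⟨ν, h⟩ else 0 with hc
  have hE : E = ∑ ν ∈ A, c ν • F ν := by
    rw [← hg, ← Finset.sum_coe_sort A]
    apply Finset.sum_congr rfl
    intro x _
    simp only [hc, x.2, dif_pos]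
  have hz : ∀ ν ∈ A, ν ≠ η → c ν = 0 := by
    intro ν hν hne
    obtain ⟨i, hi⟩ := Function.ne_iff.mp hne
    have e := eig_sum hF A c η i
    have e3 := h3 i
    rw [Yop_eq] at e3
    rw [← hE, e3, sub_self] at e
    have := lin_indep hF A _ e.symm ν hν
    exact (mul_eq_zero.mp this).resolve_right (fun h => hi (eig_inj (sub_eq_zero.mp h)))
  rw [Finset.sum_eq_single_of_mem η hηA (fun ν hν hne => by rw [hz ν hν hne, zero_smul])] at hE
  have hc1 : c η = 1 := by
    have e : cf E η = 1 := h1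
    rw [hE, cf_smul, (hF η).1, mul_one] at e
    exact e
  rw [hE, hc1, one_smul]
  exact (hF η).2.2.2

end Stmt10



open Stmt10

theorem stmt_10 (n : ℕ) (η : Fin n → ℕ)
    (T : ℕ → P n →ₗ[K] P n) (hT : IsDL n t T)
    (E : P n) (hE : IsNSMac n q t T η E) :
    eval (fun i : Fin n => t ^ (i : ℕ)) E * dP n η = t ^ lTot n η * eP n η := by
  exact main_eval n η T hT E hE
end

section
/- Let η∈ℕ^n, p∈ℕ, and let E∈K[x_1,…,x_n] satisfy the defining conditions of the non-symmetric Macdonald polynomial for η (triangular form with leading monomial x^η, and Y_i E = q^{η_i}t^{−l'_η(i)}E for all i). Then (x_1 x_2⋯x_n)^p·E satisfies the defining conditions for the composition η+p := (η_1+p,…,η_n+p); in particular, when both exist and are unique, E_{η+p} = (x_1⋯x_n)^p·E_η. -/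
/- STATEMENT 13: if E satisfies the defining conditions of the non-symmetric Macdonald
polynomial for η, then (x_1⋯x_n)^p·E satisfies them for η+p := (η_1+p,…,η_n+p). -/

open Finset MvPolynomial

namespace Stmt13

/-- leg colength l'_η(i) -/
def legCo (n : ℕ) (η : Fin n → ℕ) (i : Fin n) : ℕ :=
  (univ.filter fun k => k < i ∧ η i ≤ η k).card +
  (univ.filter fun k => i < k ∧ η i < η k).card

/-- leg length l(s) of the node s = (i,j) -/
def leg (n : ℕ) (η : Fin n → ℕ) (i : Fin n) (j : ℕ) : ℕ :=
  (univ.filter fun k => i < k ∧ j ≤ η k ∧ η k ≤ η i).card +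
  (univ.filter fun k => k < i ∧ j ≤ η k + 1 ∧ η k + 1 ≤ η i).card

/-- The field K = ℚ(q,t). -/
abbrev K : Type := FractionRing (MvPolynomial (Fin 2) ℚ)

noncomputable def q : K := algebraMap (MvPolynomial (Fin 2) ℚ) K (X 0)
noncomputable def t : K := algebraMap (MvPolynomial (Fin 2) ℚ) K (X 1)

/-- The polynomial ring K[x_1,…,x_n]. -/
abbrev P (n : ℕ) : Type := MvPolynomial (Fin n) K

/-- the automorphism s_k exchanging x_k and x_{k+1} (0-indexed; identity out of range) -/
noncomputable def sOp (n : ℕ) (k : ℕ) : P n →ₗ[K] P n :=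
  if h : k + 1 < n then
    (rename (Equiv.swap (⟨k, Nat.lt_of_succ_lt h⟩ : Fin n) ⟨k + 1, h⟩)).toLinearMap
  else LinearMap.id

/-- τ_1 : x_1 ↦ qv·x_1 (the first variable is 0-indexed) -/
noncomputable def tauOp (n : ℕ) (qv : K) : P n →ₗ[K] P n :=
  (aeval (fun j : Fin n => if (j : ℕ) = 0 then C qv * X j else X j)).toLinearMap

/-- ω := s_{n−1}⋯s_2 s_1 τ_1 -/
noncomputable def omegaOp (n : ℕ) (qv : K) : P n →ₗ[K] P n :=
  (List.range (n - 1)).foldl (fun acc k => sOp n k ∘ₗ acc) (tauOp n qv)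

/-- The defining property of the Demazure–Lustig operators T_k (0-indexed), for the
parameter value tv: (x_k − x_{k+1})·(T_k f) = (x_k − x_{k+1})·tv·f
+ (tv·x_k − x_{k+1})·(s_k f − f), i.e. T_k f is the polynomial quotient from the usual
definition. -/
def IsDL (n : ℕ) (tv : K) (T : ℕ → P n →ₗ[K] P n) : Prop :=
  ∀ k, ∀ hk : k + 1 < n, ∀ f : P n,
    (X (⟨k, Nat.lt_of_succ_lt hk⟩ : Fin n) - X ⟨k + 1, hk⟩) * T k f =
      (X (⟨k, Nat.lt_of_succ_lt hk⟩ : Fin n) - X ⟨k + 1, hk⟩) * (C tv * f) +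
      (C tv * X (⟨k, Nat.lt_of_succ_lt hk⟩ : Fin n) - X ⟨k + 1, hk⟩) * (sOp n k f - f)

/-- T_k⁻¹ = tv⁻¹ − 1 + tv⁻¹ T_k -/
noncomputable def Tinv (n : ℕ) (tv : K) (T : ℕ → P n →ₗ[K] P n) (k : ℕ) : P n →ₗ[K] P n :=
  tv⁻¹ • LinearMap.id - LinearMap.id + tv⁻¹ • T k

/-- The Cherednik operator Y_i (0-indexed i):
Y_i = tv^{i+1−n}·T_i⋯T_{n−2}·ω·T_0⁻¹⋯T_{i−1}⁻¹. -/
noncomputable def Yop (n : ℕ) (qv tv : K) (T : ℕ → P n →ₗ[K] P n) (i : Fin n) :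
    P n →ₗ[K] P n :=
  (tv ^ (n - 1 - (i : ℕ)))⁻¹ •
    (((List.range' (i : ℕ) (n - 1 - (i : ℕ))).foldr (fun k acc => T k ∘ₗ acc) LinearMap.id) ∘ₗ
      omegaOp n qv ∘ₗ
      ((List.range (i : ℕ)).foldr (fun k acc => Tinv n tv T k ∘ₗ acc) LinearMap.id))

/-- the decreasing rearrangement η⁺ of η -/
noncomputable def sortDesc (n : ℕ) (η : Fin n → ℕ) : Fin n → ℕ :=
  fun i => η (Tuple.sort η i.rev)

/-- dominance order on n-tuples (of equal sum) -/
def domLE (n : ℕ) (ν μ : Fin n → ℕ) : Prop :=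
  (∑ i, ν i = ∑ i, μ i) ∧
  ∀ p : Fin n, ∑ i ∈ univ.filter (· ≤ p), ν i ≤ ∑ i ∈ univ.filter (· ≤ p), μ i

def domLT (n : ℕ) (ν μ : Fin n → ℕ) : Prop := domLE n ν μ ∧ ν ≠ μ

/-- the order ≺ : ν ≺ η iff ν⁺ < η⁺, or ν⁺ = η⁺ and ν < η (dominance order) -/
noncomputable def prec (n : ℕ) (ν η : Fin n → ℕ) : Prop :=
  domLT n (sortDesc n ν) (sortDesc n η) ∨ (sortDesc n ν = sortDesc n η ∧ domLT n ν η)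

/-- E is the non-symmetric Macdonald polynomial for the composition η (with parameters
qv, tv and Demazure–Lustig operators T): it has the triangular form
E = x^η + Σ_{ν≺η} b_{ην} x^ν and satisfies Y_i E = qv^{η_i}·tv^{−l'_η(i)}·E for all i. -/
noncomputable def IsNSMac (n : ℕ) (qv tv : K) (T : ℕ → P n →ₗ[K] P n)
    (η : Fin n → ℕ) (E : P n) : Prop :=
  coeff (Finsupp.equivFunOnFinite.symm η) E = 1 ∧
  (∀ ν : Fin n →₀ ℕ, coeff ν E ≠ 0 → (ν : Fin n → ℕ) = η ∨ prec n (ν : Fin n → ℕ) η) ∧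
  ∀ i : Fin n, Yop n qv tv T i E = (qv ^ η i / tv ^ legCo n η i) • E

end Stmt13

open Stmt13

namespace Stmt13Aux

lemma sortDesc_add (n p : ℕ) (η : Fin n → ℕ) :
    sortDesc n (fun i => η i + p) = fun i => sortDesc n η i + p := by
  have h := (Tuple.comp_sort_eq_comp_iff_monotone (f := fun i => η i + p)
    (σ := Tuple.sort η)).2 (by
      intro a b hab
      have := Tuple.monotone_sort η hab
      simp only [Function.comp] at this ⊢
      omega)
  funext i
  have h2 := congrFun h i.rev
  simp only [Function.comp] at h2
  simp only [sortDesc]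
  exact h2.symm

lemma domLE_add (n p : ℕ) (ν μ : Fin n → ℕ) (h : domLE n ν μ) :
    domLE n (fun i => ν i + p) (fun i => μ i + p) := by
  refine ⟨?_, fun k => ?_⟩
  · simp only [Finset.sum_add_distrib, h.1]
  · simp only [Finset.sum_add_distrib]
    exact Nat.add_le_add_right (h.2 k) _

lemma domLT_add (n p : ℕ) (ν μ : Fin n → ℕ) (h : domLT n ν μ) :
    domLT n (fun i => ν i + p) (fun i => μ i + p) := by
  refine ⟨domLE_add n p ν μ h.1, fun e => h.2 ?_⟩
  funext i
  have := congrFun e i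
  simpa using this

lemma prec_add (n p : ℕ) (ν μ : Fin n → ℕ) (h : prec n ν μ) :
    prec n (fun i => ν i + p) (fun i => μ i + p) := by
  unfold prec
  rw [sortDesc_add, sortDesc_add]
  rcases h with h | ⟨h1, h2⟩
  · exact Or.inl (domLT_add _ _ _ _ h)
  · exact Or.inr ⟨by rw [h1], domLT_add _ _ _ _ h2⟩

lemma legCo_add (n p : ℕ) (η : Fin n → ℕ) (i : Fin n) :
    legCo n (fun i => η i + p) i = legCo n η i := by
  simp [legCo]

/-- the monomial (x_1⋯x_n)^p -/
noncomputable def M (n p : ℕ) : P n := (∏ i : Fin n, X i) ^ p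

lemma M_eq (n p : ℕ) :
    M n p = monomial (Finsupp.equivFunOnFinite.symm (fun _ : Fin n => p)) (1 : K) := by
  rw [monomial_eq]
  simp [M, Finsupp.prod_fintype, Finset.prod_pow]

lemma sOp_M (n p k : ℕ) (f : P n) : sOp n k (M n p * f) = M n p * sOp n k f := by
  unfold sOp
  split_ifs with h
  · simp only [AlgHom.toLinearMap_apply, map_mul]
    congr 1
    simp only [M, map_pow, map_prod, rename_X]
    rw [Equiv.prod_comp (Equiv.swap (⟨k, Nat.lt_of_succ_lt h⟩ : Fin n) ⟨k + 1, h⟩)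
      (fun i => (X i : P n))]
  · rfl

lemma tau_M (n p : ℕ) (hn : 0 < n) (qv : K) (f : P n) :
    tauOp n qv (M n p * f) = qv ^ p • (M n p * tauOp n qv f) := by
  obtain ⟨m, rfl⟩ : ∃ m, n = m + 1 := ⟨n - 1, by omega⟩
  simp only [tauOp, AlgHom.toLinearMap_apply, map_mul]
  have : (aeval (fun j : Fin (m+1) => if (j : ℕ) = 0 then C qv * X j else X j)) (M (m+1) p)
      = C (qv ^ p) * M (m+1) p := by
    simp only [M, map_pow, map_prod, aeval_X, Fin.prod_univ_succ]
    simp [mul_pow]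
    ring
  rw [this, smul_eq_C_mul, mul_assoc]

lemma omega_M (n p : ℕ) (hn : 0 < n) (qv : K) (f : P n) :
    omegaOp n qv (M n p * f) = qv ^ p • (M n p * omegaOp n qv f) := by
  unfold omegaOp
  have key : ∀ (l : List ℕ) (A : P n →ₗ[K] P n),
      (∀ f, A (M n p * f) = qv ^ p • (M n p * A f)) →
      ∀ f, (l.foldl (fun acc k => sOp n k ∘ₗ acc) A) (M n p * f)
        = qv ^ p • (M n p * (l.foldl (fun acc k => sOp n k ∘ₗ acc) A) f) := by
    intro l
    induction l with
    | nil => intro A hA f; exact hA f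
    | cons a l ih =>
      intro A hA f
      simp only [List.foldl_cons]
      refine ih _ (fun g => ?_) f
      simp only [LinearMap.comp_apply, hA, map_smul, sOp_M]
  exact key _ _ (fun f => tau_M n p hn qv f) f

lemma T_M (n p : ℕ) (tv : K) (T : ℕ → P n →ₗ[K] P n) (hT : IsDL n tv T) (k : ℕ)
    (hk : k + 1 < n) (f : P n) : T k (M n p * f) = M n p * T k f := by
  have hne : (X (⟨k, Nat.lt_of_succ_lt hk⟩ : Fin n) - X ⟨k + 1, hk⟩ : P n) ≠ 0 := by
    rw [sub_ne_zero]
    intro h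
    have := X_injective h
    simp at this
  apply mul_left_cancel₀ hne
  have h1 := hT k hk (M n p * f)
  have h2 := hT k hk f
  rw [sOp_M] at h1
  linear_combination h1 - M n p * h2

lemma Tinv_M (n p : ℕ) (tv : K) (T : ℕ → P n →ₗ[K] P n) (hT : IsDL n tv T) (k : ℕ)
    (hk : k + 1 < n) (f : P n) : Tinv n tv T k (M n p * f) = M n p * Tinv n tv T k f := by
  simp only [Tinv, LinearMap.add_apply, LinearMap.sub_apply, LinearMap.smul_apply,
    LinearMap.id_apply, T_M n p tv T hT k hk, smul_eq_C_mul]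
  ring

lemma foldr_M (n p : ℕ) (S : ℕ → P n →ₗ[K] P n) (l : List ℕ)
    (hS : ∀ k ∈ l, ∀ f, S k (M n p * f) = M n p * S k f) (f : P n) :
    (l.foldr (fun k acc => S k ∘ₗ acc) LinearMap.id) (M n p * f)
      = M n p * (l.foldr (fun k acc => S k ∘ₗ acc) LinearMap.id) f := by
  induction l with
  | nil => rfl
  | cons a l ih =>
    simp only [List.foldr_cons, LinearMap.comp_apply]
    rw [ih (fun k hk => hS k (List.mem_cons_of_mem _ hk)), hS a List.mem_cons_self]

lemma Y_M (n p : ℕ) (qv tv : K) (T : ℕ → P n →ₗ[K] P n) (hT : IsDL n tv T) (i : Fin n)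
    (f : P n) : Yop n qv tv T i (M n p * f) = qv ^ p • (M n p * Yop n qv tv T i f) := by
  have hi := i.2
  simp only [Yop, LinearMap.smul_apply, LinearMap.comp_apply]
  rw [foldr_M n p (Tinv n tv T), omega_M n p (by omega), map_smul, foldr_M n p T]
  · rw [mul_smul_comm, smul_comm]
  · intro k hk f
    rw [List.mem_range'_1] at hk
    exact T_M n p tv T hT k (by omega) f
  · intro k hk f
    rw [List.mem_range] at hk
    exact Tinv_M n p tv T hT k (by omega) f

end Stmt13Aux

open Stmt13Aux

theorem stmt_13 (n : ℕ) (p : ℕ) (η : Fin n → ℕ)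
    (T : ℕ → P n →ₗ[K] P n) (hT : IsDL n t T)
    (E : P n) (hE : IsNSMac n q t T η E) :
    IsNSMac n q t T (fun i => η i + p) ((∏ i : Fin n, X i) ^ p * E) := by
  change IsNSMac n q t T (fun i => η i + p) (M n p * E)
  obtain ⟨h1, h2, h3⟩ := hE
  refine ⟨?_, ?_, ?_⟩
  · have e : (Finsupp.equivFunOnFinite.symm (fun i => η i + p) : Fin n →₀ ℕ)
        = Finsupp.equivFunOnFinite.symm (fun _ : Fin n => p)
          + Finsupp.equivFunOnFinite.symm η := by
      ext i
      simp [add_comm]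
    rw [M_eq, e, coeff_monomial_mul, h1, one_mul]
  · intro ν hν
    rw [M_eq, coeff_monomial_mul'] at hν
    split_ifs at hν with hle
    · rw [one_mul] at hν
      have hsub : (ν : Fin n → ℕ) = fun i =>
          (ν - Finsupp.equivFunOnFinite.symm (fun _ : Fin n => p)) i + p := by
        funext i
        have := hle i
        simp at this ⊢
        omega
      rw [hsub]
      rcases h2 _ hν with h | h
      · left
        rw [h]
      · right
        exact prec_add n p _ _ h
    · exact absurd rfl hν
  · intro i
    rw [Y_M n p q t T hT, h3 i, legCo_add, mul_smul_comm, smul_smul]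
    congr 1
    rw [pow_add]
    ring
end

section
/- (q-analogue of the Cauchy double alternant.) In K[x_1,…,x_n,y_1,…,y_n] with K=ℚ(q,t), let U^{−(x)} denote the operator U^- acting on the x-variables, with the y_j treated as scalars. Then U^{−(x)}( ∏_{1≤i<j≤n}(1−x_j y_i)(1−t x_i y_j) ) = ∏_{1≤i<j≤n}(t x_i − x_j) · ∏_{1≤i<j≤n}(t^{−1} y_i − y_j). -/
/- STATEMENT 16 (q-analogue of the Cauchy double alternant):
U^{−(x)}( ∏_{i<j}(1−x_j y_i)(1−t x_i y_j) ) = ∏_{i<j}(t x_i − x_j) · ∏_{i<j}(t⁻¹ y_i − y_j),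
where U⁻ acts on the x-variables with the y-variables treated as scalars. -/

set_option synthInstance.maxHeartbeats 1000000
set_option maxHeartbeats 1000000

open Finset MvPolynomial

namespace Stmt16

/-- The field K = ℚ(q,t). -/
abbrev K : Type := FractionRing (MvPolynomial (Fin 2) ℚ)

noncomputable def q : K := algebraMap (MvPolynomial (Fin 2) ℚ) K (X 0)
noncomputable def t : K := algebraMap (MvPolynomial (Fin 2) ℚ) K (X 1)

/-- The coefficient ring K[y_1,…,y_n]. -/
abbrev Ry (n : ℕ) : Type := MvPolynomial (Fin n) K

/-- The ring K[x_1,…,x_n,y_1,…,y_n], viewed as polynomials in the x-variables over K[y]. -/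
abbrev Pxy (n : ℕ) : Type := MvPolynomial (Fin n) (Ry n)

/-- the automorphism s_k exchanging x_k and x_{k+1}, fixing the y-variables -/
noncomputable def sOp (n : ℕ) (k : ℕ) : Pxy n →ₗ[Ry n] Pxy n :=
  if h : k + 1 < n then
    (rename (Equiv.swap (⟨k, Nat.lt_of_succ_lt h⟩ : Fin n) ⟨k + 1, h⟩)).toLinearMap
  else LinearMap.id

/-- The defining property of the Demazure–Lustig operators T_k acting on the x-variables:
(x_k − x_{k+1})·(T_k f) = (x_k − x_{k+1})·t·f + (t·x_k − x_{k+1})·(s_k f − f). -/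
def IsDL (n : ℕ) (T : ℕ → Pxy n →ₗ[Ry n] Pxy n) : Prop :=
  ∀ k, ∀ hk : k + 1 < n, ∀ f : Pxy n,
    (X (⟨k, Nat.lt_of_succ_lt hk⟩ : Fin n) - X ⟨k + 1, hk⟩) * T k f =
      (X (⟨k, Nat.lt_of_succ_lt hk⟩ : Fin n) - X ⟨k + 1, hk⟩) * (C (C t) * f) +
      (C (C t) * X (⟨k, Nat.lt_of_succ_lt hk⟩ : Fin n) - X ⟨k + 1, hk⟩) * (sOp n k f - f)

/-- the adjacent transposition s_k as a permutation (identity out of range, 0-indexed) -/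
def sPerm (n : ℕ) (k : ℕ) : Equiv.Perm (Fin n) :=
  if h : k + 1 < n then Equiv.swap ⟨k, Nat.lt_of_succ_lt h⟩ ⟨k + 1, h⟩ else 1

/-- the length l(σ) of a permutation, i.e. its number of inversions -/
def inversions {n : ℕ} (σ : Equiv.Perm (Fin n)) : ℕ :=
  (univ.filter fun p : Fin n × Fin n => p.1 < p.2 ∧ σ p.2 < σ p.1).card

/-- The defining property of σ ↦ T_σ: T_1 = id and T_{σ·s_k} = T_σ ∘ T_k whenever
l(σ·s_k) = l(σ)+1. -/
def IsTsigma (n : ℕ) (T : ℕ → Pxy n →ₗ[Ry n] Pxy n)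
    (Tw : Equiv.Perm (Fin n) → Pxy n →ₗ[Ry n] Pxy n) : Prop :=
  Tw 1 = LinearMap.id ∧
  ∀ σ : Equiv.Perm (Fin n), ∀ k, k + 1 < n →
    inversions (σ * sPerm n k) = inversions σ + 1 →
    Tw (σ * sPerm n k) = Tw σ ∘ₗ T k

/-- U⁻ := Σ_σ (−t)^{−l(σ)} T_σ (acting on the x-variables) -/
noncomputable def Uminus (n : ℕ) (Tw : Equiv.Perm (Fin n) → Pxy n →ₗ[Ry n] Pxy n) :
    Pxy n →ₗ[Ry n] Pxy n :=
  ∑ σ : Equiv.Perm (Fin n), (C (((-t) ^ inversions σ)⁻¹) : Ry n) • Tw σ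

end Stmt16

open Stmt16
namespace Stmt16

def invSet {n : ℕ} (σ : Equiv.Perm (Fin n)) : Finset (Fin n × Fin n) :=
  univ.filter fun p : Fin n × Fin n => p.1 < p.2 ∧ σ p.2 < σ p.1

theorem invSet_card {n : ℕ} (σ : Equiv.Perm (Fin n)) : (invSet σ).card = inversions σ := rfl

theorem mem_invSet {n : ℕ} (σ : Equiv.Perm (Fin n)) (p : Fin n × Fin n) :
    p ∈ invSet σ ↔ p.1 < p.2 ∧ σ p.2 < σ p.1 := by
  simp only [invSet, mem_filter, mem_univ, true_and]

theorem sPerm_sq {n : ℕ} (k : ℕ) : sPerm n k * sPerm n k = 1 := by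
  unfold sPerm; split_ifs <;> simp

theorem sPerm_eq {n k : ℕ} (hk : k + 1 < n) :
    sPerm n k = Equiv.swap ⟨k, Nat.lt_of_succ_lt hk⟩ ⟨k + 1, hk⟩ := by
  simp [sPerm, hk]

theorem sPerm_left {n k : ℕ} (hk : k + 1 < n) :
    sPerm n k ⟨k, Nat.lt_of_succ_lt hk⟩ = ⟨k + 1, hk⟩ := by simp [sPerm_eq hk]

theorem sPerm_right {n k : ℕ} (hk : k + 1 < n) :
    sPerm n k ⟨k + 1, hk⟩ = ⟨k, Nat.lt_of_succ_lt hk⟩ := by simp [sPerm_eq hk]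

theorem sPerm_val {n k : ℕ} (hk : k + 1 < n) (i : Fin n) :
    (sPerm n k i : ℕ) = if (i : ℕ) = k then k + 1 else if (i : ℕ) = k + 1 then k else i := by
  rw [sPerm_eq hk, Equiv.swap_apply_def]
  simp only [Fin.ext_iff]
  split_ifs <;> simp

theorem sPerm_lt {n k : ℕ} (hk : k + 1 < n) {i j : Fin n} (hij : i < j)
    (hne : ¬ ((i : ℕ) = k ∧ (j : ℕ) = k + 1)) : sPerm n k i < sPerm n k j := by
  rw [Fin.lt_def, sPerm_val hk, sPerm_val hk]
  rw [Fin.lt_def] at hij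
  split_ifs <;> omega

theorem sPerm_sPerm {n k : ℕ} (i : Fin n) : sPerm n k (sPerm n k i) = i := by
  have := congrArg (fun f : Equiv.Perm (Fin n) => f i) (sPerm_sq (n := n) k)
  simpa using this

theorem invSet_mul {n k : ℕ} (hk : k + 1 < n) (σ : Equiv.Perm (Fin n))
    (h : σ ⟨k, Nat.lt_of_succ_lt hk⟩ < σ ⟨k + 1, hk⟩) :
    invSet (σ * sPerm n k) = insert (⟨k, Nat.lt_of_succ_lt hk⟩, ⟨k + 1, hk⟩)
      ((invSet σ).map ((sPerm n k).prodCongr (sPerm n k)).toEmbedding) := by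
  ext ⟨i, j⟩
  simp only [mem_invSet, Equiv.Perm.mul_apply, mem_insert,
    Prod.mk.injEq, mem_map, Equiv.coe_toEmbedding, Equiv.prodCongr_apply, Prod.map, Prod.exists]
  constructor
  · rintro ⟨hij, hs⟩
    by_cases hne : (i : ℕ) = k ∧ (j : ℕ) = k + 1
    · left; exact ⟨Fin.ext hne.1, Fin.ext hne.2⟩
    · right
      exact ⟨_, _, ⟨sPerm_lt hk hij hne, hs⟩, sPerm_sPerm i, sPerm_sPerm j⟩
  · rintro (⟨rfl, rfl⟩ | ⟨a, b, ⟨hab, hs⟩, rfl, rfl⟩)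
    · rw [sPerm_left hk, sPerm_right hk]
      exact ⟨by simp [Fin.lt_def], h⟩
    · rw [sPerm_sPerm, sPerm_sPerm]
      refine ⟨sPerm_lt hk hab ?_, hs⟩
      rintro ⟨h1, h2⟩
      have h1 : a = ⟨k, Nat.lt_of_succ_lt hk⟩ := Fin.ext h1
      have h2 : b = ⟨k + 1, hk⟩ := Fin.ext h2
      subst h1 h2
      exact absurd h (not_lt.mpr hs.le)

theorem notMem_map {n k : ℕ} (hk : k + 1 < n) (σ : Equiv.Perm (Fin n)) :
    ((⟨k, Nat.lt_of_succ_lt hk⟩, ⟨k + 1, hk⟩) : Fin n × Fin n) ∉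
      ((invSet σ).map ((sPerm n k).prodCongr (sPerm n k)).toEmbedding) := by
  simp only [mem_invSet,
    Prod.mk.injEq, mem_map, Equiv.coe_toEmbedding, Equiv.prodCongr_apply, Prod.map, Prod.exists]
  rintro ⟨a, b, ⟨hab, hs⟩, h1, h2⟩
  have h1' := congrArg (sPerm n k) h1
  have h2' := congrArg (sPerm n k) h2
  rw [sPerm_sPerm, sPerm_left hk] at h1'
  rw [sPerm_sPerm, sPerm_right] at h2'
  subst h1' h2'
  simp [Fin.lt_def] at hab

theorem inv_mul {n k : ℕ} (hk : k + 1 < n) (σ : Equiv.Perm (Fin n))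
    (h : σ ⟨k, Nat.lt_of_succ_lt hk⟩ < σ ⟨k + 1, hk⟩) :
    inversions (σ * sPerm n k) = inversions σ + 1 := by
  rw [← invSet_card, invSet_mul hk σ h, card_insert_of_notMem (notMem_map hk σ), card_map,
    invSet_card]

theorem prod_inv_mul {n k : ℕ} (hk : k + 1 < n) (σ : Equiv.Perm (Fin n))
    (h : σ ⟨k, Nat.lt_of_succ_lt hk⟩ < σ ⟨k + 1, hk⟩) {L : Type*} [CommMonoid L]
    (b : Fin n → Fin n → L) :
    ∏ p ∈ invSet (σ * sPerm n k), b ((σ * sPerm n k) p.2) ((σ * sPerm n k) p.1) =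
    b (σ ⟨k, Nat.lt_of_succ_lt hk⟩) (σ ⟨k + 1, hk⟩) * ∏ p ∈ invSet σ, b (σ p.2) (σ p.1) := by
  rw [invSet_mul hk σ h, prod_insert (notMem_map hk σ), prod_map]
  simp [sPerm_left hk, sPerm_right hk, sPerm_sPerm]

theorem inv_desc {n k : ℕ} (hk : k + 1 < n) (σ : Equiv.Perm (Fin n))
    (h : σ ⟨k + 1, hk⟩ < σ ⟨k, Nat.lt_of_succ_lt hk⟩) :
    inversions σ = inversions (σ * sPerm n k) + 1 := by
  rw [← inv_mul hk (σ * sPerm n k), mul_assoc, sPerm_sq, mul_one]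
  simpa [sPerm_left hk, sPerm_right hk] using h

theorem asc_or_desc {n k : ℕ} (hk : k + 1 < n) (σ : Equiv.Perm (Fin n)) :
    σ ⟨k, Nat.lt_of_succ_lt hk⟩ < σ ⟨k + 1, hk⟩ ∨ σ ⟨k + 1, hk⟩ < σ ⟨k, Nat.lt_of_succ_lt hk⟩ := by
  apply lt_or_gt_of_ne
  intro h
  have := σ.injective h
  simp at this

theorem perm_eq_one {n : ℕ} (τ : Equiv.Perm (Fin n)) (h : ∀ j, j ≤ τ j) : τ = 1 := by
  have h1 : ∑ j, ((j : Fin n) : ℕ) = ∑ j, (τ j : ℕ) :=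
    (Equiv.sum_comp τ (fun j => (j : ℕ))).symm
  rw [Finset.sum_eq_sum_iff_of_le (fun j _ => Fin.le_def.mp (h j))] at h1
  ext j
  simp [← h1 j (mem_univ _)]

theorem exists_desc {n : ℕ} (σ : Equiv.Perm (Fin n)) (h1 : σ ≠ 1) :
    ∃ k, ∃ hk : k + 1 < n, σ ⟨k + 1, hk⟩ < σ ⟨k, Nat.lt_of_succ_lt hk⟩ := by
  by_contra! hc
  apply h1
  apply perm_eq_one
  have key : ∀ k (hk : k < n), k ≤ (σ ⟨k, hk⟩ : ℕ) := by
    intro k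
    induction k with
    | zero => intro hk; simp
    | succ k ih =>
      intro hk
      have h2 := ih (Nat.lt_of_succ_lt hk)
      rcases asc_or_desc hk σ with h | h
      · rw [Fin.lt_def] at h; omega
      · exact absurd h (not_lt.mpr (hc k hk))
  exact fun j => key j j.2

theorem perm_ind {n : ℕ} {P : Equiv.Perm (Fin n) → Prop} (h1 : P 1)
    (hs : ∀ σ k (hk : k + 1 < n), σ ⟨k, Nat.lt_of_succ_lt hk⟩ < σ ⟨k + 1, hk⟩ → P σ →
      P (σ * sPerm n k)) (σ : Equiv.Perm (Fin n)) : P σ := by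
  induction hm : inversions σ using Nat.strong_induction_on generalizing σ with
  | _ m ih =>
    by_cases h : σ = 1
    · rwa [h]
    · obtain ⟨k, hk, hd⟩ := exists_desc σ h
      have := hs (σ * sPerm n k) k hk (by simpa [sPerm_left hk, sPerm_right hk] using hd)
        (ih _ (by rw [← hm, inv_desc hk σ hd]; omega) _ rfl)
      rwa [mul_assoc, sPerm_sq, mul_one] at this

theorem inv_one {n : ℕ} : inversions (1 : Equiv.Perm (Fin n)) = 0 := by
  rw [inversions, Finset.filter_false_of_mem]
  · rfl
  · rintro p - ⟨h1, h2⟩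
    exact absurd h1 (not_lt.mpr h2.le)

theorem sign_eq_inv {n : ℕ} (σ : Equiv.Perm (Fin n)) :
    (Equiv.Perm.sign σ : ℤ) = (-1) ^ inversions σ := by
  induction σ using perm_ind with
  | h1 => simp [inv_one]
  | hs σ k hk h ih =>
    rw [inv_mul hk σ h, pow_succ, ← ih, Equiv.Perm.sign_mul, sPerm_eq hk, Equiv.Perm.sign_swap]
    · simp
    · simp

theorem expand {n : ℕ} {P L : Type*} [Field L] (e : Equiv.Perm (Fin n) → P → L)
    (t : L) (b : Fin n → Fin n → L) (T : ℕ → P → P)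
    (hT : ∀ k (hk : k + 1 < n) τ f, e τ (T k f) =
      (t - b (τ ⟨k, Nat.lt_of_succ_lt hk⟩) (τ ⟨k + 1, hk⟩)) * e τ f +
        b (τ ⟨k, Nat.lt_of_succ_lt hk⟩) (τ ⟨k + 1, hk⟩) * e (τ * sPerm n k) f)
    (Tw : Equiv.Perm (Fin n) → P → P) (h1 : ∀ f, Tw 1 f = f)
    (hTw : ∀ σ k, k + 1 < n → inversions (σ * sPerm n k) = inversions σ + 1 →
      ∀ f, Tw (σ * sPerm n k) f = Tw σ (T k f)) (σ : Equiv.Perm (Fin n)) :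
    ∃ a : Equiv.Perm (Fin n) → L, (∀ f, e 1 (Tw σ f) = ∑ τ, a τ * e τ f) ∧
      (∀ τ, inversions σ ≤ inversions τ → τ ≠ σ → a τ = 0) ∧
      a σ = ∏ p ∈ invSet σ, b (σ p.2) (σ p.1) := by
  induction σ using perm_ind with
  | h1 =>
    refine ⟨fun τ => if τ = 1 then 1 else 0, ?_, ?_, ?_⟩
    · simp [h1]
    · intro τ _ h; simp [h]
    · have : invSet (1 : Equiv.Perm (Fin n)) = ∅ := by
        rw [← Finset.card_eq_zero, invSet_card, inv_one]
      simp [this]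
  | hs σ k hk h ih =>
    obtain ⟨a, ha, hz, hl⟩ := ih
    have hi := inv_mul hk σ h
    set B : Equiv.Perm (Fin n) → L := fun τ => b (τ ⟨k, Nat.lt_of_succ_lt hk⟩) (τ ⟨k + 1, hk⟩) with hB
    have hle : ∀ τ : Equiv.Perm (Fin n), inversions τ ≤ inversions (τ * sPerm n k) + 1 := by
      intro τ
      rcases asc_or_desc hk τ with h | h
      · have := inv_mul hk τ h; omega
      · have := inv_desc hk τ h; omega
    have hss : ∀ τ : Equiv.Perm (Fin n), τ * sPerm n k * sPerm n k = τ := by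
      intro τ; rw [mul_assoc, sPerm_sq, mul_one]
    refine ⟨fun τ => a τ * (t - B τ) + a (τ * sPerm n k) * B (τ * sPerm n k), ?_, ?_, ?_⟩
    · intro f
      rw [hTw σ k hk hi, ha]
      simp only [hT k hk, add_mul, mul_add, sum_add_distrib]
      congr 1
      · refine sum_congr rfl fun τ _ => by simp only [hB]; ring
      · rw [← Equiv.sum_comp (Equiv.mulRight (sPerm n k))]
        refine sum_congr rfl fun τ _ => ?_
        simp only [Equiv.coe_mulRight, hss, hB]; ring
    · intro τ hle' hne
      have e1 : a τ = 0 := by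
        apply hz
        · omega
        · rintro rfl; omega
      have e2 : a (τ * sPerm n k) = 0 := by
        apply hz
        · have := hle τ; omega
        · intro hh; apply hne; rw [← hh, hss]
      simp [e1, e2]
    · have e1 : a (σ * sPerm n k) = 0 := by
        apply hz
        · omega
        · intro hh; rw [hh] at hi; omega
      rw [prod_inv_mul hk σ h]
      simp only [e1, hss, hl, hB]; ring

theorem invSet_rev {n : ℕ} : invSet (Fin.revPerm : Equiv.Perm (Fin n)) =
    univ.filter fun p : Fin n × Fin n => p.1 < p.2 := by
  ext p; simp [invSet]

theorem inv_le_rev {n : ℕ} (σ : Equiv.Perm (Fin n)) :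
    inversions σ ≤ inversions (Fin.revPerm : Equiv.Perm (Fin n)) := by
  rw [← invSet_card, ← invSet_card, invSet_rev]
  apply card_le_card
  intro p; simp only [invSet, mem_filter]; tauto

theorem prod_rev {n : ℕ} {L : Type*} [CommMonoid L] (b : Fin n → Fin n → L) :
    ∏ p ∈ invSet (Fin.revPerm : Equiv.Perm (Fin n)), b (Fin.revPerm p.2) (Fin.revPerm p.1) =
    ∏ p ∈ univ.filter (fun p : Fin n × Fin n => p.1 < p.2), b p.1 p.2 := by
  rw [invSet_rev]
  refine prod_bij' (fun p _ => (Fin.revPerm p.2, Fin.revPerm p.1))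
    (fun p _ => (Fin.revPerm p.2, Fin.revPerm p.1)) ?_ ?_ ?_ ?_ ?_ <;> simp

/-- abstract form of the formula for `U⁻` -/
theorem U_formula {n : ℕ} {P L : Type*} [Field L] (e : Equiv.Perm (Fin n) → P → L)
    (hli : LinearIndependent L e) (s : ℕ → P → P)
    (hs : ∀ k, k + 1 < n → ∀ τ f, e τ (s k f) = e (τ * sPerm n k) f)
    (t : L) (b : Fin n → Fin n → L) (T : ℕ → P → P)
    (hT : ∀ k (hk : k + 1 < n) τ f, e τ (T k f) =
      (t - b (τ ⟨k, Nat.lt_of_succ_lt hk⟩) (τ ⟨k + 1, hk⟩)) * e τ f +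
        b (τ ⟨k, Nat.lt_of_succ_lt hk⟩) (τ ⟨k + 1, hk⟩) * e (τ * sPerm n k) f)
    (Tw : Equiv.Perm (Fin n) → P → P) (h1 : ∀ f, Tw 1 f = f)
    (hTw : ∀ σ k, k + 1 < n → inversions (σ * sPerm n k) = inversions σ + 1 →
      ∀ f, Tw (σ * sPerm n k) f = Tw σ (T k f))
    (hU : ∀ k, k + 1 < n → ∀ f, ∑ σ, ((-t) ^ inversions σ)⁻¹ * e 1 (Tw σ (s k f)) =
      - ∑ σ, ((-t) ^ inversions σ)⁻¹ * e 1 (Tw σ f)) (f : P) :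
    ∑ σ, ((-t) ^ inversions σ)⁻¹ * e 1 (Tw σ f) =
      (t ^ (univ.filter (fun p : Fin n × Fin n => p.1 < p.2)).card)⁻¹ *
      (∏ p ∈ univ.filter (fun p : Fin n × Fin n => p.1 < p.2), b p.1 p.2) *
      ∑ τ, (-1) ^ inversions τ * e τ f := by
  choose a ha hz hl using expand e t b T hT Tw h1 hTw
  set c : Equiv.Perm (Fin n) → L := fun τ => ∑ σ, ((-t) ^ inversions σ)⁻¹ * a σ τ with hc
  have hUc : ∀ f, ∑ σ, ((-t) ^ inversions σ)⁻¹ * e 1 (Tw σ f) = ∑ τ, c τ * e τ f := by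
    intro f
    simp only [ha, hc, sum_mul, mul_sum]
    rw [sum_comm]
    simp only [mul_assoc]
  have hcs : ∀ k, k + 1 < n → ∀ τ, c (τ * sPerm n k) = - c τ := by
    intro k hk τ
    have hz : ∑ τ, (c (τ * sPerm n k) + c τ) • e τ = 0 := by
      funext f
      have := hU k hk f
      rw [hUc, hUc] at this
      simp only [hs k hk] at this
      rw [← Equiv.sum_comp (Equiv.mulRight (sPerm n k))] at this
      simp only [Equiv.coe_mulRight, mul_assoc, sPerm_sq, mul_one] at this
      simp only [Finset.sum_apply, Pi.smul_apply, smul_eq_mul, add_mul, sum_add_distrib, this,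
        Pi.zero_apply]
      ring
    have := Fintype.linearIndependent_iff.mp hli _ hz τ
    linear_combination this
  have hc1 : ∀ τ, c τ = (-1) ^ inversions τ * c 1 := by
    intro τ
    induction τ using perm_ind with
    | h1 => simp [inv_one]
    | hs σ k hk h ih => rw [hcs k hk, inv_mul hk σ h, ih]; ring
  have hw : c Fin.revPerm = ((-t) ^ inversions (Fin.revPerm : Equiv.Perm (Fin n)))⁻¹ *
      ∏ p ∈ univ.filter (fun p : Fin n × Fin n => p.1 < p.2), b p.1 p.2 := by
    rw [hc, ← prod_rev, ← hl]
    refine sum_eq_single _ ?_ (by simp)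
    intro σ _ hne
    rw [hz σ _ (inv_le_rev σ) hne.symm, mul_zero]
  have hN : inversions (Fin.revPerm : Equiv.Perm (Fin n)) =
      (univ.filter (fun p : Fin n × Fin n => p.1 < p.2)).card := by
    rw [← invSet_card, invSet_rev]
  rw [hUc, mul_sum]
  refine sum_congr rfl fun τ _ => ?_
  have h2 := hc1 Fin.revPerm
  rw [hw, hN] at h2
  rw [hc1 τ]
  set N := (univ.filter (fun p : Fin n × Fin n => p.1 < p.2)).card
  have hsq : ((-1 : L) ^ N) * (-1) ^ N = 1 := by rw [← mul_pow]; simp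
  have h3 : c 1 = (t ^ N)⁻¹ * ∏ p ∈ univ.filter (fun p : Fin n × Fin n => p.1 < p.2), b p.1 p.2 := by
    calc c 1 = (-1) ^ N * ((-1) ^ N * c 1) := by rw [← mul_assoc, hsq, one_mul]
      _ = _ := by
        rw [← h2, neg_pow t, mul_inv, ← inv_pow, inv_neg_one, ← mul_assoc, ← mul_assoc, hsq, one_mul]
  rw [h3]; ring
end Stmt16

namespace Stmt16

noncomputable def alt {n : ℕ} {R : Type*} [CommRing R] (f : MvPolynomial (Fin n) R) :
    MvPolynomial (Fin n) R :=
  ∑ τ : Equiv.Perm (Fin n), (-1) ^ inversions τ * rename τ f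

theorem alt_monomial {n : ℕ} {R : Type*} [CommRing R] (m : Fin n →₀ ℕ) (hm : ∀ i, m i < n)
    (r : R) : ∃ e : R, alt (monomial m r) =
      C e * (Matrix.vandermonde (fun i : Fin n => (X i : MvPolynomial (Fin n) R))).det := by
  set V := Matrix.vandermonde (fun i : Fin n => (X i : MvPolynomial (Fin n) R)) with hV
  set g : Fin n → Fin n := fun i => ⟨m i, hm i⟩ with hg
  have h1 : alt (monomial m r) = C r * (V.submatrix id g).det := by
    rw [alt, Matrix.det_apply', mul_sum]
    refine sum_congr rfl fun τ _ => ?_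
    rw [monomial_eq, Finsupp.prod_fintype _ _ (by simp), sign_eq_inv]
    simp only [map_mul, rename_C, map_prod, map_pow, rename_X, Matrix.submatrix_apply, id, hV, hg,
      Matrix.vandermonde_apply]
    push_cast
    ring
  by_cases hgi : Function.Injective g
  · let p : Equiv.Perm (Fin n) := Equiv.ofBijective g (Finite.injective_iff_bijective.mp hgi)
    have : V.submatrix id g = V.submatrix id p := rfl
    refine ⟨r * ((Equiv.Perm.sign p : ℤ) : R), ?_⟩
    rw [h1, this, Matrix.det_permute']
    simp [mul_assoc]
  · refine ⟨0, ?_⟩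
    obtain ⟨i, j, hij, hne⟩ : ∃ i j, g i = g j ∧ i ≠ j := by
      simpa [Function.Injective] using hgi
    rw [h1, Matrix.det_zero_of_column_eq hne]
    · simp
    · intro k; simp [hij]

theorem alt_add {n : ℕ} {R : Type*} [CommRing R] {ι : Type*} (s : Finset ι)
    (f : ι → MvPolynomial (Fin n) R) : alt (∑ i ∈ s, f i) = ∑ i ∈ s, alt (f i) := by
  simp only [alt, map_sum, mul_sum]
  rw [sum_comm]

theorem det_eq {n : ℕ} {R : Type*} [CommRing R] (v : Fin n → R) :
    (Matrix.vandermonde v).det =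
      (-1) ^ (univ.filter (fun p : Fin n × Fin n => p.1 < p.2)).card *
        ∏ p ∈ univ.filter (fun p : Fin n × Fin n => p.1 < p.2), (v p.1 - v p.2) := by
  rw [Matrix.det_vandermonde, ← prod_const, ← prod_mul_distrib, prod_filter,
    ← univ_product_univ, prod_product]
  refine prod_congr rfl fun i _ => ?_
  rw [← prod_filter]
  refine prod_congr ?_ fun j _ => by ring
  ext j; simp

theorem alt_eq {n : ℕ} {R : Type*} [CommRing R] (f : MvPolynomial (Fin n) R)
    (hf : ∀ m ∈ f.support, ∀ i, m i < n) : ∃ e : R, alt f =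
      C e * ∏ p ∈ univ.filter (fun p : Fin n × Fin n => p.1 < p.2), (X p.1 - X p.2) := by
  have h1 : ∀ m : Fin n →₀ ℕ, ∃ e : R, m ∈ f.support → alt (monomial m (coeff m f)) =
      C e * (Matrix.vandermonde (fun i : Fin n => (X i : MvPolynomial (Fin n) R))).det := by
    intro m
    by_cases h : m ∈ f.support
    · obtain ⟨e, he⟩ := alt_monomial m (hf m h) (coeff m f)
      exact ⟨e, fun _ => he⟩
    · exact ⟨0, fun h' => absurd h' h⟩
  choose e he using h1
  refine ⟨(∑ m ∈ f.support, e m) * (-1) ^ (univ.filter (fun p : Fin n × Fin n => p.1 < p.2)).card, ?_⟩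
  conv_lhs => rw [f.as_sum, alt_add, sum_congr rfl he, ← sum_mul, det_eq, ← map_sum]
  simp [mul_assoc]

/-- the Cauchy kernel -/
noncomputable def ker {n : ℕ} {k : Type*} [Field k] (t : k) :
    MvPolynomial (Fin n) (MvPolynomial (Fin n) k) :=
  ∏ p ∈ univ.filter fun p : Fin n × Fin n => p.1 < p.2,
          ((1 - X p.2 * C (X p.1)) * (1 - C (C t) * X p.1 * C (X p.2)))

theorem degree_lin {n : ℕ} {R : Type*} [CommRing R] [Nontrivial R] (i k : Fin n) (r : R) :
    degreeOf k (1 - C r * X i : MvPolynomial (Fin n) R) ≤ if i = k then 1 else 0 := by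
  refine (degreeOf_sub_le _ _ _).trans ?_
  rw [degreeOf_one]
  refine max_le (by simp) ((degreeOf_C_mul_le _ _ _).trans ?_)
  rw [degreeOf_X]
  simp [eq_comm]

theorem ker_degree {n : ℕ} {k : Type*} [Field k] (t : k) :
    ∀ m ∈ (ker (n := n) t).support, ∀ i, m i < n := by
  intro m hm i
  have hn : 0 < n := i.pos
  revert m
  rw [← degreeOf_lt_iff hn, ker]
  refine (degreeOf_prod_le _ _ _).trans_lt ?_
  have h1 : ∀ p ∈ univ.filter (fun p : Fin n × Fin n => p.1 < p.2), degreeOf i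
      (((1 - X p.2 * C (X p.1)) * (1 - C (C t) * X p.1 * C (X p.2))) :
        MvPolynomial (Fin n) (MvPolynomial (Fin n) k)) ≤
      (if p.2 = i then 1 else 0) + (if p.1 = i then 1 else 0) := by
    intro p _
    refine (degreeOf_mul_le _ _ _).trans (add_le_add ?_ ?_)
    · rw [mul_comm (X p.2)]; exact degree_lin _ _ _
    · rw [mul_right_comm, ← C_mul]; exact degree_lin _ _ _
  refine (sum_le_sum h1).trans_lt ?_
  rw [sum_add_distrib, sum_filter, sum_filter, ← univ_product_univ, sum_product_right, sum_product]
  have s1 : (∑ y : Fin n, ∑ x : Fin n, if x < y then (if y = i then 1 else 0) else 0) =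
      ∑ x : Fin n, if x < i then 1 else 0 := by
    rw [sum_eq_single i (by intro b _ hb; simp [hb]) (by simp)]
    simp
  have s2 : (∑ x : Fin n, ∑ y : Fin n, if x < y then (if x = i then 1 else 0) else 0) =
      ∑ y : Fin n, if i < y then 1 else 0 := by
    rw [sum_eq_single i (by intro b _ hb; simp [hb]) (by simp)]
    simp
  rw [s1, s2, ← card_filter, ← card_filter]
  have e1 : (univ.filter fun a => a < i) = Iio i := by ext; simp
  have e2 : (univ.filter fun a => i < a) = Ioi i := by ext; simp
  rw [e1, e2, Fin.card_Iio, Fin.card_Ioi]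
  omega

theorem alt_ker {n : ℕ} {k : Type*} [Field k] (t : k) :
    alt (ker (n := n) t) =
      C (∏ p ∈ univ.filter (fun p : Fin n × Fin n => p.1 < p.2), (X p.1 - C t * X p.2)) *
      ∏ p ∈ univ.filter (fun p : Fin n × Fin n => p.1 < p.2), (X p.1 - X p.2) := by
  obtain ⟨e, he⟩ := alt_eq (ker (n := n) t) (ker_degree t)
  rw [he]
  congr 2
  let j : MvPolynomial (Fin n) k →+* FractionRing (MvPolynomial (Fin n) k) := algebraMap _ _
  have hj : Function.Injective j := IsFractionRing.injective _ _
  let φ := eval₂Hom j (fun i : Fin n => (j (X i))⁻¹)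
  have hφX : ∀ i, φ (X i) = (j (X i))⁻¹ := by intro i; simp [φ]
  have hφC : ∀ r, φ (C r) = j r := by intro i; simp [φ]
  have hX : ∀ i : Fin n, j (X i) ≠ 0 := by
    intro i h
    exact X_ne_zero (R := k) i (hj (by rw [h, map_zero]))
  have h0 : ∀ τ : Equiv.Perm (Fin n), τ ≠ 1 → φ (rename τ (ker t)) = 0 := by
    intro τ hτ
    obtain ⟨b, hb⟩ : ∃ b, τ b < b := by
      by_contra! hc
      exact hτ (perm_eq_one τ hc)
    rw [ker, map_prod, map_prod]
    apply prod_eq_zero (i := (τ b, b)) (by simpa using hb)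
    simp only [map_mul, map_sub, map_one, rename_X, rename_C, hφX, hφC]
    rw [inv_mul_cancel₀ (hX _)]; simp
  have h1 : φ (alt (ker t)) = φ (ker t) := by
    rw [alt, map_sum, sum_eq_single 1]
    · simp [inv_one]
    · intro τ _ hτ; rw [map_mul, h0 τ hτ, mul_zero]
    · simp
  have hD : φ (∏ p ∈ univ.filter (fun p : Fin n × Fin n => p.1 < p.2), (X p.1 - X p.2)) ≠ 0 := by
    rw [map_prod, prod_ne_zero_iff]
    intro p hp h
    rw [map_sub, hφX, hφX, sub_eq_zero, inv_inj] at h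
    have := X_injective (hj h)
    simp [this] at hp
  have h2 : φ (ker t) = j (∏ p ∈ univ.filter (fun p : Fin n × Fin n => p.1 < p.2),
      (X p.1 - C t * X p.2)) *
      φ (∏ p ∈ univ.filter (fun p : Fin n × Fin n => p.1 < p.2), (X p.1 - X p.2)) := by
    rw [ker, map_prod, map_prod, map_prod, ← prod_mul_distrib]
    refine prod_congr rfl fun p _ => ?_
    simp only [map_mul, map_sub, map_one, hφX, hφC]
    have := hX p.1
    have := hX p.2
    field_simp
  apply hj
  apply mul_right_cancel₀ hD
  rw [← h2, ← h1, he, map_mul, hφC]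

theorem t_ne_zero : t ≠ 0 := by
  rw [t, Ne, IsFractionRing.to_map_eq_zero_iff]
  exact X_ne_zero _

theorem sOp_eq {n k : ℕ} (hk : k + 1 < n) (f : Pxy n) : sOp n k f = rename (sPerm n k) f := by
  simp [sOp, sPerm, hk]

theorem X_sub_ne {n : ℕ} {i j : Fin n} (h : i ≠ j) : (X i - X j : Pxy n) ≠ 0 := by
  rw [sub_ne_zero]
  exact fun h' => h (X_injective h')

theorem T_inv {n : ℕ} {T : ℕ → Pxy n →ₗ[Ry n] Pxy n} (hT : IsDL n T) {k : ℕ} (hk : k + 1 < n)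
    (f : Pxy n) (hf : sOp n k f = f) : T k f = (C t : Ry n) • f := by
  have h := hT k hk f
  rw [hf, sub_self, mul_zero, add_zero] at h
  rw [smul_eq_C_mul]
  refine mul_left_cancel₀ (X_sub_ne ?_) h
  simp

theorem U_inv {n : ℕ} {T : ℕ → Pxy n →ₗ[Ry n] Pxy n} (hT : IsDL n T)
    {Tw : Equiv.Perm (Fin n) → Pxy n →ₗ[Ry n] Pxy n} (hTw : IsTsigma n T Tw)
    {k : ℕ} (hk : k + 1 < n) (f : Pxy n) (hf : sOp n k f = f) : Uminus n Tw f = 0 := by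
  have key : ∀ σ : Equiv.Perm (Fin n), σ ⟨k, Nat.lt_of_succ_lt hk⟩ < σ ⟨k + 1, hk⟩ →
      (C (((-t) ^ inversions σ)⁻¹) : Ry n) • Tw σ f +
      (C (((-t) ^ inversions (σ * sPerm n k))⁻¹) : Ry n) • Tw (σ * sPerm n k) f = 0 := by
    intro σ h
    have hi := inv_mul hk σ h
    rw [hTw.2 σ k hk hi, LinearMap.comp_apply, T_inv hT hk f hf, map_smul, smul_smul, ← add_smul,
      hi, ← C_mul, ← C_add]
    have : ((-t) ^ inversions σ)⁻¹ + ((-t) ^ (inversions σ + 1))⁻¹ * t = 0 := by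
      have := t_ne_zero
      rw [pow_succ, mul_inv, mul_assoc, inv_neg, neg_mul, inv_mul_cancel₀ this]
      ring
    rw [this, C_0, zero_smul]
  rw [Uminus, LinearMap.sum_apply]
  simp only [LinearMap.smul_apply]
  refine sum_involution (fun σ _ => σ * sPerm n k) ?_ ?_ ?_ ?_
  · intro σ _
    rcases asc_or_desc hk σ with h | h
    · exact key σ h
    · have := key (σ * sPerm n k) (by simpa [sPerm_left hk, sPerm_right hk] using h)
      rw [mul_assoc, sPerm_sq, mul_one] at this
      rw [add_comm]; exact this
  · intro σ _ _ h
    have h' : sPerm n k = 1 := by simpa using h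
    have := sPerm_left hk
    rw [h'] at this
    simp at this
  · simp
  · intro σ _
    simp only [mul_assoc, sPerm_sq, mul_one]

theorem U_sOp {n : ℕ} {T : ℕ → Pxy n →ₗ[Ry n] Pxy n} (hT : IsDL n T)
    {Tw : Equiv.Perm (Fin n) → Pxy n →ₗ[Ry n] Pxy n} (hTw : IsTsigma n T Tw)
    {k : ℕ} (hk : k + 1 < n) (f : Pxy n) : Uminus n Tw (sOp n k f) = - Uminus n Tw f := by
  have := U_inv hT hTw hk (sOp n k f + f) (by
    rw [map_add, sOp_eq hk, sOp_eq hk, rename_rename, add_comm]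
    congr 1
    have : (sPerm n k ∘ sPerm n k : Fin n → Fin n) = id := by
      funext i; simp [sPerm_sPerm]
    rw [this, rename_id_apply])
  rw [map_add] at this
  exact eq_neg_of_add_eq_zero_left this

theorem U_main {n : ℕ} {L : Type*} [Field L] (ι : Pxy n →+* L) (hι : Function.Injective ι)
    {T : ℕ → Pxy n →ₗ[Ry n] Pxy n} (hT : IsDL n T)
    {Tw : Equiv.Perm (Fin n) → Pxy n →ₗ[Ry n] Pxy n} (hTw : IsTsigma n T Tw) (f : Pxy n) :
    ι (Uminus n Tw f) =
      (ι (C (C t)) ^ (univ.filter (fun p : Fin n × Fin n => p.1 < p.2)).card)⁻¹ *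
      (∏ p ∈ univ.filter (fun p : Fin n × Fin n => p.1 < p.2),
        ι (C (C t) * X p.1 - X p.2) / ι (X p.1 - X p.2)) * ι (alt f) := by
  have hc : ∀ m : ℕ, ι (C (C (((-t) ^ m)⁻¹))) = ((- ι (C (C t))) ^ m)⁻¹ := by
    intro m
    let κ : K →+* L := ι.comp ((C : Ry n →+* Pxy n).comp C)
    change κ (((-t) ^ m)⁻¹) = ((- κ t) ^ m)⁻¹
    rw [map_inv₀, map_pow, map_neg]
  have hU : ∀ f, ι (Uminus n Tw f) =
      ∑ σ, ((- ι (C (C t))) ^ inversions σ)⁻¹ * ι (rename (1 : Equiv.Perm (Fin n)) (Tw σ f)) := by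
    intro f
    rw [Uminus, LinearMap.sum_apply, map_sum]
    refine sum_congr rfl fun σ _ => ?_
    rw [LinearMap.smul_apply, smul_eq_C_mul, map_mul, hc, Equiv.Perm.coe_one, rename_id_apply]
  have hli : LinearIndependent L
      (fun (τ : Equiv.Perm (Fin n)) (f : Pxy n) => ι (rename τ f)) := by
    refine (linearIndependent_monoidHom (Pxy n) L).comp
      (fun τ : Equiv.Perm (Fin n) => (ι.comp (rename τ : Pxy n →ₐ[Ry n] Pxy n).toRingHom : Pxy n →* L)) ?_
    intro τ τ' h
    ext i
    have := DFunLike.congr_fun h (X i)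
    have := hι this
    simp only [AlgHom.toRingHom_eq_coe, RingHom.coe_coe, rename_X] at this
    rw [X_injective this]
  have hmulp : ∀ (τ τ' : Equiv.Perm (Fin n)) (f : Pxy n),
      rename τ (rename τ' f) = rename (τ * τ') f := by
    intro τ τ' f; rw [rename_rename]; rfl
  have main := U_formula (fun (τ : Equiv.Perm (Fin n)) (f : Pxy n) => ι (rename τ f)) hli
    (fun k f => sOp n k f) ?_ (ι (C (C t)))
    (fun i j => ι (C (C t) * X i - X j) / ι (X i - X j)) (fun k f => T k f) ?_
    (fun σ f => Tw σ f) ?_ ?_ ?_ f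
  · rw [hU, main, alt, map_sum]
    simp only [map_mul, map_pow, map_neg, map_one]
  · intro k hk τ f
    simp only [sOp_eq hk, hmulp]
  · intro k hk τ f
    have h := congrArg (fun g => ι (rename τ g)) (hT k hk f)
    simp only [sOp_eq hk, map_mul, map_sub, map_add, rename_X, rename_C, hmulp] at h
    have hne : ι (X (τ ⟨k, Nat.lt_of_succ_lt hk⟩)) - ι (X (τ ⟨k + 1, hk⟩)) ≠ 0 := by
      rw [← map_sub]
      intro h0
      refine X_sub_ne (n := n) ?_ (hι (h0.trans (map_zero ι).symm))
      simp
    simp only [map_mul, map_sub]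
    apply mul_left_cancel₀ hne
    rw [h]
    field_simp
    ring
  · intro f; rw [hTw.1]; rfl
  · intro σ k hk hi f; simp only [hTw.2 σ k hk hi]; rfl
  · intro k hk f
    rw [← hU, ← hU, U_sOp hT hTw hk, map_neg]

end Stmt16

open Stmt16

theorem stmt_16 (n : ℕ)
    (T : ℕ → Pxy n →ₗ[Ry n] Pxy n) (hT : IsDL n T)
    (Tw : Equiv.Perm (Fin n) → Pxy n →ₗ[Ry n] Pxy n) (hTw : IsTsigma n T Tw) :
    Uminus n Tw
        (∏ p ∈ univ.filter fun p : Fin n × Fin n => p.1 < p.2,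
          ((1 - X p.2 * C (X p.1)) * (1 - C (C t) * X p.1 * C (X p.2)))) =
      (∏ p ∈ univ.filter fun p : Fin n × Fin n => p.1 < p.2, (C (C t) * X p.1 - X p.2)) *
      C (∏ p ∈ univ.filter fun p : Fin n × Fin n => p.1 < p.2, (C t⁻¹ * X p.1 - X p.2)) := by
  let ι : Pxy n →+* FractionRing (Pxy n) := algebraMap (Pxy n) (FractionRing (Pxy n))
  have hι : Function.Injective ι := IsFractionRing.injective (Pxy n) (FractionRing (Pxy n))
  apply hι
  have h := U_main ι hι hT hTw (ker t)
  rw [alt_ker, map_mul] at h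
  refine Eq.trans h ?_
  have hD : ι (∏ p ∈ univ.filter (fun p : Fin n × Fin n => p.1 < p.2), (X p.1 - X p.2)) ≠ 0 := by
    rw [Ne, map_eq_zero_iff ι hι, prod_eq_zero_iff]
    rintro ⟨p, hp, h0⟩
    exact X_sub_ne (by simpa using (mem_filter.mp hp).2.ne) h0
  have ht : ι (C (C t)) ≠ 0 := by
    rw [Ne, map_eq_zero_iff ι hι, C_eq_zero, C_eq_zero]
    exact t_ne_zero
  have h2 : (∏ p ∈ univ.filter (fun p : Fin n × Fin n => p.1 < p.2),
      (X p.1 - C t * X p.2) : Ry n) =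
      (C t) ^ (univ.filter (fun p : Fin n × Fin n => p.1 < p.2)).card *
      ∏ p ∈ univ.filter (fun p : Fin n × Fin n => p.1 < p.2), (C t⁻¹ * X p.1 - X p.2) := by
    rw [← prod_const, ← prod_mul_distrib]
    refine prod_congr rfl fun p _ => ?_
    rw [mul_sub, ← mul_assoc, ← C_mul, mul_inv_cancel₀ t_ne_zero, C_1, one_mul]
  rw [h2, prod_div_distrib, ← map_prod, ← map_prod, C_mul, C_pow, map_mul, map_mul, map_pow]
  field_simp
end
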